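/- arXiv:1711.10889 — 3 statements merged into one kernel-verified Lean document; each statement's English description precedes it below -/
import Mathlib

section
/- Let E be a CPTP map on d×d complex matrices. For a ∈ (0,1], the function A ↦ Tr((E(A^a))^{1/a}) is concave on the set of positive definite d×d matrices, and for a ∈ [1,2] it is convex on the set of positive definite d×d matrices. -/
open Matrix
open scoped ComplexOrder

/-- Matrix power `A ^ t` for real `t`, via the continuous functional calculus
(applying `x ↦ x ^ t` to the eigenvalues of a Hermitian matrix `A`). -/
noncomputable def mpow {d : ℕ} (A : Matrix (Fin d) (Fin d) ℂ) (t : ℝ) :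
    Matrix (Fin d) (Fin d) ℂ :=
  cfc (fun x : ℝ => x ^ t) A

/-- The Tsallis-based relative entropy
`S̃_a(ρ|σ) = ((Tr (ρ^a σ^(1-a)))^(1/a) - 1) / (a - 1)`. -/
noncomputable def tsallis {d : ℕ} (a : ℝ) (ρ σ : Matrix (Fin d) (Fin d) ℂ) : ℝ :=
  ((((mpow ρ a * mpow σ (1 - a)).trace).re) ^ (1 / a) - 1) / (a - 1)

/-!
Write `φ K a (A, B) = Re Tr (Kᴴ A ^ a K B ^ (1 - a))`. In eigenbases of `A` and `B` this is a
nonnegative combination of the values of `x ^ a * y ^ (1 - a)` at pairs of eigenvalues. The kernels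
`x ^ 2 / (α x + β y)` give jointly convex functionals of `(A, B)`, since completing the square
exhibits them as suprema of functionals linear in `(A, B)`. For `1 < a < 2` the kernel
`x ^ a * y ^ (1 - a)` is a positive superposition of these, and for `0 < a < 1` one of the kernels
`x * y / (u x + y) = x - u x ^ 2 / (u x + y)`. Hence `φ K a` is jointly concave for `0 < a ≤ 1`
(Lieb) and jointly convex for `1 ≤ a ≤ 2` (Ando).

Young's inequality, applied to pairs of eigenvalues, gives
`a Tr (H ^ (1 / a)) = opt_Z (Re Tr (H Z ^ (1 - a)) - (1 - a) Tr Z)`, the optimum being a maximum for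
`a ≤ 1` and an infimum for `1 ≤ a`. For `H = ∑ i, K i * A ^ a * (K i)ᴴ` the expression on the right
is jointly concave, respectively convex, in `(A, Z)`, and optimizing over `Z` preserves this.
-/

open scoped MatrixOrder

section PartialOptimization

variable {E F : Type*} [AddCommGroup E] [Module ℝ E] [AddCommGroup F] [Module ℝ F]

lemma convexOn_of_isLUB {ι : Type*} {s : Set E} {f : E → ℝ} {g : ι → E → ℝ}
    (hs : Convex ℝ s) (hg : ∀ i, ConvexOn ℝ s (g i))
    (hf : ∀ x ∈ s, IsLUB (Set.range fun i ↦ g i x) (f x)) : ConvexOn ℝ s f := by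
  refine ⟨hs, fun x hx y hy a b ha hb hab ↦
    (hf _ (hs hx hy ha hb hab)).2 (Set.forall_mem_range.2 fun i ↦ ?_)⟩
  have hgf : ∀ z ∈ s, g i z ≤ f z := fun z hz ↦ (hf z hz).1 ⟨i, rfl⟩
  calc g i (a • x + b • y) ≤ a • g i x + b • g i y := (hg i).2 hx hy ha hb hab
    _ ≤ a • f x + b • f y := by gcongr <;> exact hgf _ ‹_›

lemma concaveOn_of_isGreatest_image {s : Set E} {t : Set F} {f : E × F → ℝ} {g : E → ℝ}
    (hs : Convex ℝ s) (hf : ConcaveOn ℝ (s ×ˢ t) f)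
    (hg : ∀ x ∈ s, IsGreatest ((fun y ↦ f (x, y)) '' t) (g x)) : ConcaveOn ℝ s g := by
  refine ⟨hs, fun x hx x' hx' a b ha hb hab ↦ ?_⟩
  obtain ⟨y, hy, hgx⟩ := (hg x hx).1
  obtain ⟨y', hy', hgx'⟩ := (hg x' hx').1
  have hmem := hf.1 (Set.mk_mem_prod hx hy) (Set.mk_mem_prod hx' hy') ha hb hab
  rw [← hgx, ← hgx']
  exact (hf.2 (Set.mk_mem_prod hx hy) (Set.mk_mem_prod hx' hy') ha hb hab).trans
    ((hg _ hmem.1).2 ⟨_, hmem.2, rfl⟩)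

lemma convexOn_of_isGLB_image {s : Set E} {t : Set F} {f : E × F → ℝ} {g : E → ℝ}
    (hs : Convex ℝ s) (hf : ConvexOn ℝ (s ×ˢ t) f)
    (hg : ∀ x ∈ s, IsGLB ((fun y ↦ f (x, y)) '' t) (g x)) : ConvexOn ℝ s g := by
  refine ⟨hs, fun x hx x' hx' a b ha hb hab ↦ le_of_forall_pos_le_add fun ε hε ↦ ?_⟩
  obtain ⟨_, ⟨y, hy, rfl⟩, -, hfx⟩ := (hg x hx).exists_between (lt_add_of_pos_right _ hε)
  obtain ⟨_, ⟨y', hy', rfl⟩, -, hfx'⟩ := (hg x' hx').exists_between (lt_add_of_pos_right _ hε)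
  have hmem := hf.1 (Set.mk_mem_prod hx hy) (Set.mk_mem_prod hx' hy') ha hb hab
  calc g (a • x + b • x') ≤ f (a • (x, y) + b • (x', y')) := (hg _ hmem.1).1 ⟨_, hmem.2, rfl⟩
    _ ≤ a • f (x, y) + b • f (x', y') :=
      hf.2 (Set.mk_mem_prod hx hy) (Set.mk_mem_prod hx' hy') ha hb hab
    _ ≤ a • (g x + ε) + b • (g x' + ε) := by gcongr
    _ = a • g x + b • g x' + ε := by simp only [smul_eq_mul]; linear_combination ε * hab

open MeasureTheory in
lemma convexOn_integral {Ω : Type*} [MeasurableSpace Ω] {μ : Measure Ω} {s : Set E}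
    {f : Ω → E → ℝ} (hs : Convex ℝ s) (hf : ∀ᵐ ω ∂μ, ConvexOn ℝ s (f ω))
    (hint : ∀ x ∈ s, Integrable (fun ω ↦ f ω x) μ) :
    ConvexOn ℝ s fun x ↦ ∫ ω, f ω x ∂μ := by
  refine ⟨hs, fun x hx y hy a b ha hb hab ↦ ?_⟩
  have hx' : Integrable (fun ω ↦ a • f ω x) μ := (hint x hx).smul a
  have hy' : Integrable (fun ω ↦ b • f ω y) μ := (hint y hy).smul b
  calc ∫ ω, f ω (a • x + b • y) ∂μ ≤ ∫ ω, (a • f ω x + b • f ω y) ∂μ :=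
        integral_mono_ae (hint _ (hs hx hy ha hb hab)) (hx'.add hy')
          (hf.mono fun ω hω ↦ hω.2 hx hy ha hb hab)
    _ = a • ∫ ω, f ω x ∂μ + b • ∫ ω, f ω y ∂μ := by
      rw [integral_add hx' hy', integral_smul, integral_smul]

lemma convexOn_sum {ι : Type*} {s : Set E} {f : ι → E → ℝ} (t : Finset ι) (hs : Convex ℝ s)
    (hf : ∀ i ∈ t, ConvexOn ℝ s (f i)) : ConvexOn ℝ s fun x ↦ ∑ i ∈ t, f i x := by
  simpa only [Finset.sum_fn] using
    Finset.sum_induction f (ConvexOn ℝ s) (fun _ _ ↦ ConvexOn.add) (convexOn_const 0 hs) hf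

lemma concaveOn_sum {ι : Type*} {s : Set E} {f : ι → E → ℝ} (t : Finset ι) (hs : Convex ℝ s)
    (hf : ∀ i ∈ t, ConcaveOn ℝ s (f i)) : ConcaveOn ℝ s fun x ↦ ∑ i ∈ t, f i x := by
  simpa only [Finset.sum_fn] using
    Finset.sum_induction f (ConcaveOn ℝ s) (fun _ _ ↦ ConcaveOn.add) (concaveOn_const 0 hs) hf

end PartialOptimization

section Cfc

variable {m 𝕜 : Type*} [RCLike 𝕜]

lemma convex_posSemidef : Convex ℝ {A : Matrix m m 𝕜 | A.PosSemidef} :=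
  fun _ hA _ hB _ _ ha hb _ ↦ (hA.smul ha).add (hB.smul hb)

lemma convex_posDef : Convex ℝ {A : Matrix m m 𝕜 | A.PosDef} := by
  refine convex_iff_forall_pos.2 fun A hA B hB a b ha hb _ ↦ ?_
  exact (PosDef.smul hA ha).add (PosDef.smul hB hb)

variable [Fintype m] [DecidableEq m] {A : Matrix m m 𝕜}

lemma spectrum_nonneg_of_posSemidef (hA : A.PosSemidef) {x : ℝ} (hx : x ∈ spectrum ℝ A) : 0 ≤ x :=
  spectrum_nonneg_of_nonneg hA.nonneg hx

lemma spectrum_pos_of_posDef (hA : A.PosDef) {x : ℝ} (hx : x ∈ spectrum ℝ A) : 0 < x :=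
  (isStrictlyPositive_iff_posDef.2 hA).spectrum_pos hx

lemma posSemidef_cfc {f : ℝ → ℝ} (hf : ∀ x ∈ spectrum ℝ A, 0 ≤ f x) : (cfc f A).PosSemidef :=
  nonneg_iff_posSemidef.1 (cfc_nonneg hf)

lemma posDef_cfc (hA : A.IsHermitian) {f : ℝ → ℝ} (hf : ∀ x ∈ spectrum ℝ A, 0 < f x) :
    (cfc f A).PosDef :=
  isStrictlyPositive_iff_posDef.1 <|
    (cfc_isStrictlyPositive_iff f A (finite_real_spectrum.continuousOn _) hA.isSelfAdjoint).2 hf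

lemma trace_cfc (hA : A.IsHermitian) (f : ℝ → ℝ) :
    (cfc f A).trace = ∑ i, (f (hA.eigenvalues i) : 𝕜) := by
  rw [hA.cfc_eq, IsHermitian.cfc, Unitary.conjStarAlgAut_apply, trace_mul_cycle,
    Unitary.coe_star_mul_self, one_mul, trace_diagonal]
  rfl

lemma mul_cfc_cfc (hA : A.IsHermitian) (f g : ℝ → ℝ) :
    A * cfc g (cfc f A) = cfc (fun x ↦ x * g (f x)) A := by
  have hfin := finite_real_spectrum (A := A)
  rw [cfc_mul (fun x ↦ x) (fun x ↦ g (f x)) A (hfin.continuousOn _) (hfin.continuousOn _),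
    cfc_id' ℝ A hA.isSelfAdjoint,
    cfc_comp' g f A ((hfin.image f).continuousOn _) (hfin.continuousOn _) hA.isSelfAdjoint]

end Cfc

section SpectralForm

variable {m n 𝕜 : Type*} [Fintype m] [DecidableEq m] [Fintype n] [DecidableEq n] [RCLike 𝕜]
  {A : Matrix m m 𝕜} {B : Matrix n n 𝕜}

/-- The coordinates of `K` in the bases of rank-one matrices `u vᴴ`, for `u` and `v` running
through the chosen eigenvectors of `A` and `B`. -/
noncomputable def eigenCoords (hA : A.IsHermitian) (hB : B.IsHermitian) (K : Matrix m n 𝕜) :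
    Matrix m n 𝕜 :=
  star (hA.eigenvectorUnitary : Matrix m m 𝕜) * K * (hB.eigenvectorUnitary : Matrix n n 𝕜)

lemma eigenCoords_surjective (hA : A.IsHermitian) (hB : B.IsHermitian) :
    Function.Surjective (eigenCoords hA hB) := fun Y ↦
  ⟨(hA.eigenvectorUnitary : Matrix m m 𝕜) * Y * star (hB.eigenvectorUnitary : Matrix n n 𝕜), by
    rw [eigenCoords, Matrix.mul_assoc, Matrix.mul_assoc, Matrix.mul_assoc,
      Unitary.coe_star_mul_self, Matrix.mul_one, ← Matrix.mul_assoc, Unitary.coe_star_mul_self,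
      Matrix.one_mul]⟩

lemma eigenCoords_cfc_mul_mul_cfc (hA : A.IsHermitian) (hB : B.IsHermitian) (f g : ℝ → ℝ)
    (K : Matrix m n 𝕜) (i : m) (j : n) :
    eigenCoords hA hB (cfc f A * K * cfc g B) i j =
      (f (hA.eigenvalues i) : 𝕜) * eigenCoords hA hB K i j * (g (hB.eigenvalues j) : 𝕜) := by
  have hdiag : eigenCoords hA hB (cfc f A * K * cfc g B) =
      diagonal (fun i ↦ (f (hA.eigenvalues i) : 𝕜)) * eigenCoords hA hB K *
        diagonal (fun j ↦ (g (hB.eigenvalues j) : 𝕜)) := by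
    rw [hA.cfc_eq, hB.cfc_eq, IsHermitian.cfc, IsHermitian.cfc, Unitary.conjStarAlgAut_apply,
      Unitary.conjStarAlgAut_apply]
    simp only [eigenCoords, Matrix.mul_assoc, Unitary.coe_star_mul_self, Matrix.mul_one]
    simp only [← Matrix.mul_assoc, Unitary.coe_star_mul_self, Matrix.one_mul]
    rfl
  rw [hdiag, mul_diagonal, diagonal_mul]

lemma trace_conjTranspose_mul_eq_sum_eigenCoords (hA : A.IsHermitian) (hB : B.IsHermitian)
    (X Y : Matrix m n 𝕜) :
    (Xᴴ * Y).trace = ∑ i, ∑ j, star (eigenCoords hA hB X i j) * eigenCoords hA hB Y i j := by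
  have hcoords : (eigenCoords hA hB X)ᴴ * eigenCoords hA hB Y =
      star (hB.eigenvectorUnitary : Matrix n n 𝕜) * (Xᴴ * Y) *
        (hB.eigenvectorUnitary : Matrix n n 𝕜) := by
    simp only [eigenCoords, conjTranspose_mul, star_eq_conjTranspose, conjTranspose_conjTranspose,
      Matrix.mul_assoc]
    simp only [← star_eq_conjTranspose, ← Matrix.mul_assoc _ (star _),
      Unitary.mul_star_self_of_mem hA.eigenvectorUnitary.2, Matrix.one_mul]
  have htrace : (Xᴴ * Y).trace = ((eigenCoords hA hB X)ᴴ * eigenCoords hA hB Y).trace := by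
    rw [hcoords, trace_mul_cycle, Unitary.mul_star_self_of_mem hB.eigenvectorUnitary.2,
      Matrix.one_mul]
  rw [htrace, Finset.sum_comm]
  simp only [trace, diag_apply, mul_apply, conjTranspose_apply]

open Classical in
/-- The quadratic form `⟨K, F(L_A, R_B) K⟩` of the Hilbert–Schmidt inner product, where `L_A` and
`R_B` are the commuting operators of left multiplication by `A` and right multiplication by `B`.
Junk value `0` unless both matrices are Hermitian. -/
noncomputable def spectralForm (K : Matrix m n 𝕜) (F : ℝ → ℝ → ℝ)
    (p : Matrix m m 𝕜 × Matrix n n 𝕜) : ℝ :=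
  if h : p.1.IsHermitian ∧ p.2.IsHermitian then
    ∑ i, ∑ j, ‖eigenCoords h.1 h.2 K i j‖ ^ 2 * F (h.1.eigenvalues i) (h.2.eigenvalues j)
  else 0

lemma spectralForm_of_isHermitian (hA : A.IsHermitian) (hB : B.IsHermitian) (K : Matrix m n 𝕜)
    (F : ℝ → ℝ → ℝ) :
    spectralForm K F (A, B) =
      ∑ i, ∑ j, ‖eigenCoords hA hB K i j‖ ^ 2 * F (hA.eigenvalues i) (hB.eigenvalues j) :=
  dif_pos ⟨hA, hB⟩

lemma re_trace_eq_spectralForm (hA : A.IsHermitian) (hB : B.IsHermitian) (f g : ℝ → ℝ)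
    (K : Matrix m n 𝕜) :
    RCLike.re (Kᴴ * cfc f A * K * cfc g B).trace =
      spectralForm K (fun x y ↦ f x * g y) (A, B) := by
  rw [Matrix.mul_assoc Kᴴ, Matrix.mul_assoc Kᴴ,
    trace_conjTranspose_mul_eq_sum_eigenCoords hA hB, spectralForm_of_isHermitian hA hB, map_sum]
  refine Finset.sum_congr rfl fun i _ ↦ ?_
  rw [map_sum]
  refine Finset.sum_congr rfl fun j _ ↦ ?_
  rw [eigenCoords_cfc_mul_mul_cfc, mul_right_comm, mul_left_comm, RCLike.star_def,
    RCLike.conj_mul]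
  norm_cast
  rw [mul_comm]

lemma spectralForm_mono (K : Matrix m n 𝕜) {F G : ℝ → ℝ → ℝ}
    {p : Matrix m m 𝕜 × Matrix n n 𝕜}
    (h : ∀ x ∈ spectrum ℝ p.1, ∀ y ∈ spectrum ℝ p.2, F x y ≤ G x y) :
    spectralForm K F p ≤ spectralForm K G p := by
  unfold spectralForm
  split_ifs with hp
  · gcongr with i _ j _
    exact h _ (hp.1.eigenvalues_mem_spectrum_real i) _ (hp.2.eigenvalues_mem_spectrum_real j)
  · exact le_rfl

lemma spectralForm_congr (K : Matrix m n 𝕜) {F G : ℝ → ℝ → ℝ}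
    {p : Matrix m m 𝕜 × Matrix n n 𝕜}
    (h : ∀ x ∈ spectrum ℝ p.1, ∀ y ∈ spectrum ℝ p.2, F x y = G x y) :
    spectralForm K F p = spectralForm K G p :=
  (spectralForm_mono K fun x hx y hy ↦ (h x hx y hy).le).antisymm
    (spectralForm_mono K fun x hx y hy ↦ (h x hx y hy).ge)

lemma spectralForm_sub (K : Matrix m n 𝕜) (F G : ℝ → ℝ → ℝ) :
    spectralForm K (fun x y ↦ F x y - G x y) = spectralForm K F - spectralForm K G := by
  ext p
  rw [Pi.sub_apply]
  unfold spectralForm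
  split_ifs
  · simp only [mul_sub, Finset.sum_sub_distrib]
  · exact (sub_zero 0).symm

lemma spectralForm_const_mul (K : Matrix m n 𝕜) (c : ℝ) (F : ℝ → ℝ → ℝ) :
    spectralForm K (fun x y ↦ c * F x y) = c • spectralForm K F := by
  ext p
  rw [Pi.smul_apply, smul_eq_mul]
  unfold spectralForm
  split_ifs
  · simp only [Finset.mul_sum, mul_left_comm]
  · exact (mul_zero c).symm

section Integral

open MeasureTheory

variable {Ω : Type*} [MeasurableSpace Ω] {μ : Measure Ω}

lemma integrable_spectralForm (K : Matrix m n 𝕜) {F : Ω → ℝ → ℝ → ℝ}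
    {p : Matrix m m 𝕜 × Matrix n n 𝕜}
    (hF : ∀ x ∈ spectrum ℝ p.1, ∀ y ∈ spectrum ℝ p.2, Integrable (fun ω ↦ F ω x y) μ) :
    Integrable (fun ω ↦ spectralForm K (F ω) p) μ := by
  unfold spectralForm
  split_ifs with hp
  · exact integrable_finsetSum _ fun i _ ↦ integrable_finsetSum _ fun j _ ↦
      (hF _ (hp.1.eigenvalues_mem_spectrum_real i) _
        (hp.2.eigenvalues_mem_spectrum_real j)).const_mul _
  · exact integrable_zero _ _ _

lemma integral_spectralForm (K : Matrix m n 𝕜) {F : Ω → ℝ → ℝ → ℝ}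
    {p : Matrix m m 𝕜 × Matrix n n 𝕜}
    (hF : ∀ x ∈ spectrum ℝ p.1, ∀ y ∈ spectrum ℝ p.2, Integrable (fun ω ↦ F ω x y) μ) :
    ∫ ω, spectralForm K (F ω) p ∂μ = spectralForm K (fun x y ↦ ∫ ω, F ω x y ∂μ) p := by
  unfold spectralForm
  split_ifs with hp
  · have hint (i : m) (j : n) := (hF _ (hp.1.eigenvalues_mem_spectrum_real i) _
      (hp.2.eigenvalues_mem_spectrum_real j)).const_mul (‖eigenCoords hp.1 hp.2 K i j‖ ^ 2)
    rw [integral_finsetSum _ fun i _ ↦ integrable_finsetSum _ fun j _ ↦ hint i j]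
    refine Finset.sum_congr rfl fun i _ ↦ ?_
    rw [integral_finsetSum _ fun j _ ↦ hint i j]
    exact Finset.sum_congr rfl fun j _ ↦ integral_const_mul _ _
  · exact integral_zero _ _

lemma convexOn_spectralForm_of_eq_integral {s : Set (Matrix m m 𝕜 × Matrix n n 𝕜)}
    (hs : Convex ℝ s) (K : Matrix m n 𝕜) {F : Ω → ℝ → ℝ → ℝ} {G : ℝ → ℝ → ℝ}
    (hF : ∀ᵐ ω ∂μ, ConvexOn ℝ s (spectralForm K (F ω)))
    (hG : ∀ p ∈ s, ∀ x ∈ spectrum ℝ p.1, ∀ y ∈ spectrum ℝ p.2,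
      Integrable (fun ω ↦ F ω x y) μ ∧ G x y = ∫ ω, F ω x y ∂μ) :
    ConvexOn ℝ s (spectralForm K G) := by
  have hint : ∀ p ∈ s, ∀ x ∈ spectrum ℝ p.1, ∀ y ∈ spectrum ℝ p.2,
      Integrable (fun ω ↦ F ω x y) μ := fun p hp x hx y hy ↦ (hG p hp x hx y hy).1
  refine (convexOn_integral hs hF fun p hp ↦ integrable_spectralForm K (hint p hp)).congr
    fun p hp ↦ ?_
  beta_reduce
  rw [integral_spectralForm K (hint p hp)]
  exact spectralForm_congr K fun x hx y hy ↦ (hG p hp x hx y hy).2.symm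

lemma concaveOn_spectralForm_of_eq_integral {s : Set (Matrix m m 𝕜 × Matrix n n 𝕜)}
    (hs : Convex ℝ s) (K : Matrix m n 𝕜) {F : Ω → ℝ → ℝ → ℝ} {G : ℝ → ℝ → ℝ}
    (hF : ∀ᵐ ω ∂μ, ConcaveOn ℝ s (spectralForm K (F ω)))
    (hG : ∀ p ∈ s, ∀ x ∈ spectrum ℝ p.1, ∀ y ∈ spectrum ℝ p.2,
      Integrable (fun ω ↦ F ω x y) μ ∧ G x y = ∫ ω, F ω x y ∂μ) :
    ConcaveOn ℝ s (spectralForm K G) := by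
  have hneg (H : ℝ → ℝ → ℝ) :
      spectralForm K (fun x y ↦ -H x y) = -spectralForm K H := by
    simpa only [neg_one_mul, neg_one_smul] using spectralForm_const_mul K (-1) H
  refine neg_convexOn_iff.1 (hneg G ▸ convexOn_spectralForm_of_eq_integral (μ := μ)
    (F := fun ω x y ↦ -F ω x y) hs K (hF.mono fun ω hω ↦ hneg (F ω) ▸ hω.neg)
    fun p hp x hx y hy ↦ ?_)
  obtain ⟨hint, heq⟩ := hG p hp x hx y hy
  exact ⟨hint.neg, by rw [integral_neg, heq]⟩

end Integral

section QuadraticOverLinear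

lemma isGreatest_range_re_conj_mul_sub (w : 𝕜) {c : ℝ} (hc : 0 ≤ c) (hw : c = 0 → w = 0) :
    IsGreatest (Set.range fun z : 𝕜 ↦ 2 * RCLike.re (star z * w) - c * ‖z‖ ^ 2)
      (‖w‖ ^ 2 / c) := by
  rcases hc.eq_or_lt with rfl | hc
  · obtain rfl := hw rfl
    simp [isGreatest_singleton]
  have hsquare (z : 𝕜) : 2 * RCLike.re (star z * w) - c * ‖z‖ ^ 2 =
      ‖w‖ ^ 2 / c - c * ‖z - c⁻¹ • w‖ ^ 2 := by
    have hre : RCLike.re (z * star (c⁻¹ • w)) = c⁻¹ * RCLike.re (star z * w) := by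
      rw [star_smul, star_trivial, mul_smul_comm, RCLike.smul_re, ← RCLike.conj_re, map_mul,
        RCLike.star_def, RCLike.conj_conj]
    rw [← RCLike.normSq_eq_def' (z - _), RCLike.normSq_sub, ← RCLike.star_def, hre,
      RCLike.normSq_eq_def', RCLike.normSq_eq_def', norm_smul, norm_inv,
      Real.norm_of_nonneg hc.le]
    field_simp
    ring
  refine ⟨⟨c⁻¹ • w, ?_⟩, Set.forall_mem_range.2 fun z ↦ ?_⟩ <;> beta_reduce <;> rw [hsquare]
  · simp
  · exact sub_le_self _ (by positivity)

/-- A functional of `p = (A, B)` which is linear and whose supremum over `X` is the spectral form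
of `x ^ 2 / (α * x + β * y)`. -/
noncomputable def quadLowerBound (α β : ℝ) (K X : Matrix m n 𝕜)
    (p : Matrix m m 𝕜 × Matrix n n 𝕜) : ℝ :=
  2 * RCLike.re (Xᴴ * (p.1 * K)).trace -
    (α * RCLike.re (Xᴴ * (p.1 * X)).trace + β * RCLike.re (Xᴴ * (X * p.2)).trace)

omit [DecidableEq m] [DecidableEq n] in
lemma isLinearMap_quadLowerBound (α β : ℝ) (K X : Matrix m n 𝕜) :
    IsLinearMap ℝ (quadLowerBound α β K X) where
  map_add p q := by
    simp only [quadLowerBound, Prod.fst_add, Prod.snd_add, Matrix.add_mul, Matrix.mul_add,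
      trace_add, map_add]
    ring
  map_smul c p := by
    simp only [quadLowerBound, Prod.smul_fst, Prod.smul_snd, Matrix.smul_mul, Matrix.mul_smul,
      trace_smul, RCLike.smul_re, smul_eq_mul]
    ring

lemma quadLowerBound_eq_sum (hA : A.IsHermitian) (hB : B.IsHermitian) (α β : ℝ)
    (K X : Matrix m n 𝕜) :
    quadLowerBound α β K X (A, B) = ∑ i, ∑ j,
      (2 * RCLike.re (star (eigenCoords hA hB X i j) *
          ((hA.eigenvalues i : 𝕜) * eigenCoords hA hB K i j)) -
        (α * hA.eigenvalues i + β * hB.eigenvalues j) * ‖eigenCoords hA hB X i j‖ ^ 2) := by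
  have hleft (Y : Matrix m n 𝕜) (i : m) (j : n) : eigenCoords hA hB (A * Y) i j =
      (hA.eigenvalues i : 𝕜) * eigenCoords hA hB Y i j := by
    simpa only [cfc_id' ℝ A hA.isSelfAdjoint, cfc_const_one ℝ B hB.isSelfAdjoint, Matrix.mul_one,
      RCLike.ofReal_one, mul_one] using
      eigenCoords_cfc_mul_mul_cfc hA hB (fun x ↦ x) (fun _ ↦ 1) Y i j
  have hright (i : m) (j : n) : eigenCoords hA hB (X * B) i j =
      eigenCoords hA hB X i j * (hB.eigenvalues j : 𝕜) := by
    simpa only [cfc_id' ℝ B hB.isSelfAdjoint, cfc_const_one ℝ A hA.isSelfAdjoint, Matrix.one_mul,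
      RCLike.ofReal_one, one_mul] using
      eigenCoords_cfc_mul_mul_cfc hA hB (fun _ ↦ 1) (fun x ↦ x) X i j
  simp only [quadLowerBound, trace_conjTranspose_mul_eq_sum_eigenCoords hA hB, hleft, hright,
    map_sum, Finset.mul_sum, ← Finset.sum_add_distrib, ← Finset.sum_sub_distrib]
  refine Finset.sum_congr rfl fun i _ ↦ Finset.sum_congr rfl fun j _ ↦ ?_
  rw [mul_left_comm (star _) _ (eigenCoords hA hB X i j), ← mul_assoc (star _) _ (RCLike.ofReal _),
    RCLike.star_def, RCLike.conj_mul]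
  norm_cast
  ring

lemma isGreatest_range_quadLowerBound (K : Matrix m n 𝕜) {α β : ℝ} (hA : A.IsHermitian)
    (hB : B.IsHermitian) (hpos : ∀ x ∈ spectrum ℝ A, ∀ y ∈ spectrum ℝ B,
      0 ≤ α * x + β * y ∧ (α * x + β * y = 0 → x = 0)) :
    IsGreatest (Set.range fun X ↦ quadLowerBound α β K X (A, B))
      (spectralForm K (fun x y ↦ x ^ 2 / (α * x + β * y)) (A, B)) := by
  have hentry (i : m) (j : n) := isGreatest_range_re_conj_mul_sub
    ((hA.eigenvalues i : 𝕜) * eigenCoords hA hB K i j)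
    (hpos _ (hA.eigenvalues_mem_spectrum_real i) _ (hB.eigenvalues_mem_spectrum_real j)).1
    fun h ↦ by simp [(hpos _ (hA.eigenvalues_mem_spectrum_real i) _
      (hB.eigenvalues_mem_spectrum_real j)).2 h]
  have hform : spectralForm K (fun x y ↦ x ^ 2 / (α * x + β * y)) (A, B) =
      ∑ i, ∑ j, ‖(hA.eigenvalues i : 𝕜) * eigenCoords hA hB K i j‖ ^ 2 /
        (α * hA.eigenvalues i + β * hB.eigenvalues j) := by
    rw [spectralForm_of_isHermitian hA hB]
    refine Finset.sum_congr rfl fun i _ ↦ Finset.sum_congr rfl fun j _ ↦ ?_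
    rw [norm_mul, mul_pow, RCLike.norm_ofReal, sq_abs, mul_comm, div_mul_eq_mul_div]
  simp only [hform, quadLowerBound_eq_sum hA hB]
  refine ⟨?_, Set.forall_mem_range.2 fun X ↦ Finset.sum_le_sum fun i _ ↦
    Finset.sum_le_sum fun j _ ↦ (hentry i j).2 ⟨_, rfl⟩⟩
  choose Z hZ using fun i j ↦ (hentry i j).1
  obtain ⟨X, rfl⟩ := eigenCoords_surjective hA hB Z
  exact ⟨X, Finset.sum_congr rfl fun i _ ↦ Finset.sum_congr rfl fun j _ ↦ hZ i j⟩

lemma convexOn_spectralForm_sq_div {s : Set (Matrix m m 𝕜 × Matrix n n 𝕜)} (hs : Convex ℝ s)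
    (K : Matrix m n 𝕜) {α β : ℝ} (hherm : ∀ p ∈ s, p.1.IsHermitian ∧ p.2.IsHermitian)
    (hpos : ∀ p ∈ s, ∀ x ∈ spectrum ℝ p.1, ∀ y ∈ spectrum ℝ p.2,
      0 ≤ α * x + β * y ∧ (α * x + β * y = 0 → x = 0)) :
    ConvexOn ℝ s (spectralForm K fun x y ↦ x ^ 2 / (α * x + β * y)) :=
  convexOn_of_isLUB hs (fun X ↦ ((isLinearMap_quadLowerBound α β K X).mk' _).convexOn hs)
    fun p hp ↦ (isGreatest_range_quadLowerBound K (hherm p hp).1 (hherm p hp).2 (hpos p hp)).isLUB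

end QuadraticOverLinear

section LiebAndo

open MeasureTheory in
lemma exists_measure_rpow_mul_rpow_eq_integral_mul_div {a : ℝ} (ha : a ∈ Set.Ioo 0 1) :
    ∃ μ : Measure ℝ, ∀ x y : ℝ, 0 ≤ x → 0 ≤ y →
      IntegrableOn (fun u ↦ u ^ (-a) * (x * y / (u * x + y))) (Set.Ioi 0) μ ∧
      x ^ a * y ^ (1 - a) = ∫ u in Set.Ioi 0, u ^ (-a) * (x * y / (u * x + y)) ∂μ := by
  have ha' : 1 - a ∈ Set.Ioo 0 1 := ⟨sub_pos.2 ha.2, sub_lt_self 1 ha.1⟩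
  obtain ⟨μ, hμ⟩ := Real.exists_measure_rpow_eq_integral_rpowIntegrand₀₁ ha'
  refine ⟨μ, fun x y hx hy ↦ ?_⟩
  rcases hx.eq_or_lt with rfl | hx
  · simp [Real.zero_rpow ha.1.ne']
  have hkernel : Set.EqOn (fun u ↦ x * Real.rpowIntegrand₀₁ (1 - a) u (y / x))
      (fun u ↦ u ^ (-a) * (x * y / (u * x + y))) (Set.Ioi 0) := fun u (hu : 0 < u) ↦ by
    beta_reduce
    rw [Real.rpowIntegrand₀₁_eq_pow_div ha' hu.le (div_nonneg hy hx.le), sub_sub_cancel_left]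
    field_simp
  have hpow : x ^ a * y ^ (1 - a) = x * (y / x) ^ (1 - a) := by
    rw [Real.div_rpow hy hx.le, Real.rpow_sub hx, Real.rpow_one]
    field_simp
  obtain ⟨hint, heq⟩ := hμ (y / x) (div_nonneg hy hx.le)
  rw [hpow, heq, ← integral_const_mul, setIntegral_congr_fun measurableSet_Ioi hkernel]
  exact ⟨IntegrableOn.congr_fun (hint.const_mul x) hkernel measurableSet_Ioi, rfl⟩

open MeasureTheory in
lemma exists_measure_rpow_mul_rpow_eq_integral_sq_div {a : ℝ} (ha : a ∈ Set.Ioo 1 2) :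
    ∃ μ : Measure ℝ, ∀ x y : ℝ, 0 ≤ x → 0 < y →
      IntegrableOn (fun u ↦ u ^ (a - 2) * (x ^ 2 / (1 * x + u * y))) (Set.Ioi 0) μ ∧
      x ^ a * y ^ (1 - a) = ∫ u in Set.Ioi 0, u ^ (a - 2) * (x ^ 2 / (1 * x + u * y)) ∂μ := by
  obtain ⟨μ, hμ⟩ := exists_measure_rpow_mul_rpow_eq_integral_mul_div (a := 2 - a)
    ⟨sub_pos.2 ha.2, by linarith [ha.1]⟩
  refine ⟨μ, fun x y hx hy ↦ ?_⟩
  have hkernel (u : ℝ) : u ^ (a - 2) * (x ^ 2 / (1 * x + u * y)) =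
      x / y * (u ^ (-(2 - a)) * (y * x / (u * y + x))) := by
    rw [one_mul, add_comm, neg_sub]
    field_simp
  have hpow : x ^ a * y ^ (1 - a) = x / y * (y ^ (2 - a) * x ^ (1 - (2 - a))) := by
    have hxa : x ^ a = x ^ (1 - (2 - a)) * x := by
      rw [← Real.rpow_add_one' hx (by linarith [ha.1])]
      ring_nf
    have hya : y ^ (2 - a) = y ^ (1 - a) * y := by
      rw [← Real.rpow_add_one hy.ne']
      ring_nf
    rw [hxa, hya]
    field_simp
  obtain ⟨hint, heq⟩ := hμ y x hy.le hx
  rw [hpow, heq]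
  simp only [hkernel, integral_const_mul, and_true]
  exact hint.const_mul _

lemma concaveOn_spectralForm_fst {s : Set (Matrix m m 𝕜 × Matrix n n 𝕜)} (hs : Convex ℝ s)
    (hherm : ∀ p ∈ s, p.1.IsHermitian ∧ p.2.IsHermitian) (K : Matrix m n 𝕜) :
    ConcaveOn ℝ s (spectralForm K fun x _ ↦ x) := by
  have hlin : IsLinearMap ℝ fun p : Matrix m m 𝕜 × Matrix n n 𝕜 ↦
      RCLike.re (Kᴴ * p.1 * K).trace :=
    { map_add := fun p q ↦ by
        simp only [Prod.fst_add, Matrix.add_mul, Matrix.mul_add, trace_add, map_add]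
      map_smul := fun c p ↦ by
        simp only [Prod.smul_fst, Matrix.smul_mul, Matrix.mul_smul, trace_smul, RCLike.smul_re,
          smul_eq_mul] }
  refine ((hlin.mk' _).concaveOn hs).congr fun p hp ↦ ?_
  obtain ⟨hA, hB⟩ := hherm p hp
  simpa only [IsLinearMap.mk'_apply, cfc_id' ℝ p.1 hA.isSelfAdjoint,
    cfc_const_one ℝ p.2 hB.isSelfAdjoint, Matrix.mul_one, mul_one] using
    re_trace_eq_spectralForm hA hB (fun x ↦ x) (fun _ ↦ 1) K

lemma concaveOn_spectralForm_mul_div (K : Matrix m n 𝕜) {u : ℝ} (hu : 0 < u) :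
    ConcaveOn ℝ ({A | A.PosSemidef} ×ˢ {B | B.PosSemidef})
      (spectralForm K fun x y ↦ x * y / (u * x + y)) := by
  have hs : Convex ℝ ({A : Matrix m m 𝕜 | A.PosSemidef} ×ˢ {B : Matrix n n 𝕜 | B.PosSemidef}) :=
    convex_posSemidef.prod convex_posSemidef
  have hherm : ∀ p ∈ {A : Matrix m m 𝕜 | A.PosSemidef} ×ˢ {B : Matrix n n 𝕜 | B.PosSemidef},
      p.1.IsHermitian ∧ p.2.IsHermitian := fun p hp ↦ ⟨hp.1.isHermitian, hp.2.isHermitian⟩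
  have hsq := convexOn_spectralForm_sq_div (α := u) (β := 1) hs K hherm fun p hp x hx y hy ↦ by
    have hx := spectrum_nonneg_of_posSemidef hp.1 hx
    have hy := spectrum_nonneg_of_posSemidef hp.2 hy
    exact ⟨by positivity, fun h ↦ (mul_eq_zero.1 ((add_eq_zero_iff_of_nonneg (by positivity)
      (by positivity)).1 h).1).resolve_left hu.ne'⟩
  refine ((concaveOn_spectralForm_fst hs hherm K).sub (hsq.smul hu.le)).congr fun p hp ↦ ?_
  change (spectralForm K _ - u • spectralForm K _) p = _
  rw [← spectralForm_const_mul, ← spectralForm_sub]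
  refine spectralForm_congr K fun x hx y hy ↦ ?_
  have hx := spectrum_nonneg_of_posSemidef hp.1 hx
  have hy := spectrum_nonneg_of_posSemidef hp.2 hy
  rcases hx.eq_or_lt with rfl | hx
  · simp
  · field_simp
    ring

lemma concaveOn_spectralForm_rpow_mul_rpow (K : Matrix m n 𝕜) {a : ℝ} (ha : a ∈ Set.Ioc 0 1) :
    ConcaveOn ℝ ({A : Matrix m m 𝕜 | A.PosSemidef} ×ˢ {B : Matrix n n 𝕜 | B.PosSemidef})
      (spectralForm K fun x y ↦ x ^ a * y ^ (1 - a)) := by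
  have hs := (convex_posSemidef (m := m) (𝕜 := 𝕜)).prod (convex_posSemidef (m := n) (𝕜 := 𝕜))
  rcases ha.2.eq_or_lt with rfl | ha'
  · simpa only [Real.rpow_one, sub_self, Real.rpow_zero, mul_one] using
      concaveOn_spectralForm_fst hs (fun p hp ↦ ⟨hp.1.isHermitian, hp.2.isHermitian⟩) K
  obtain ⟨μ, hμ⟩ := exists_measure_rpow_mul_rpow_eq_integral_mul_div ⟨ha.1, ha'⟩
  refine concaveOn_spectralForm_of_eq_integral (μ := μ.restrict (Set.Ioi 0)) hs K
    (F := fun u x y ↦ u ^ (-a) * (x * y / (u * x + y)))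
    (MeasureTheory.ae_restrict_of_forall_mem measurableSet_Ioi fun u (hu : 0 < u) ↦ ?_)
    fun p hp x hx y hy ↦ ?_
  · rw [spectralForm_const_mul]
    exact (concaveOn_spectralForm_mul_div K hu).smul (by positivity)
  · exact hμ x y (spectrum_nonneg_of_posSemidef hp.1 hx) (spectrum_nonneg_of_posSemidef hp.2 hy)

lemma convexOn_spectralForm_sq_div_of_posDef (K : Matrix m n 𝕜) {α β : ℝ} (hα : 0 ≤ α)
    (hβ : 0 ≤ β) (hαβ : 0 < α + β) :
    ConvexOn ℝ ({A : Matrix m m 𝕜 | A.PosSemidef} ×ˢ {B : Matrix n n 𝕜 | B.PosDef})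
      (spectralForm K fun x y ↦ x ^ 2 / (α * x + β * y)) := by
  refine convexOn_spectralForm_sq_div (convex_posSemidef.prod convex_posDef) K
    (fun p hp ↦ ⟨hp.1.isHermitian, hp.2.isHermitian⟩) fun p hp x hx y hy ↦ ?_
  have hx := spectrum_nonneg_of_posSemidef hp.1 hx
  have hy := spectrum_pos_of_posDef hp.2 hy
  refine ⟨by positivity, fun h ↦ ?_⟩
  obtain ⟨hαx, hβy⟩ := (add_eq_zero_iff_of_nonneg (by positivity) (by positivity)).1 h
  obtain rfl : β = 0 := (mul_eq_zero.1 hβy).resolve_right hy.ne'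
  exact (mul_eq_zero.1 hαx).resolve_left (by simpa only [add_zero] using hαβ.ne')

lemma convexOn_spectralForm_rpow_mul_rpow (K : Matrix m n 𝕜) {a : ℝ} (ha : a ∈ Set.Icc 1 2) :
    ConvexOn ℝ ({A : Matrix m m 𝕜 | A.PosSemidef} ×ˢ {B : Matrix n n 𝕜 | B.PosDef})
      (spectralForm K fun x y ↦ x ^ a * y ^ (1 - a)) := by
  rcases ha.1.eq_or_lt with rfl | ha₁
  · refine (convexOn_spectralForm_sq_div_of_posDef K zero_le_one le_rfl (by norm_num)).congr
      fun p _ ↦ spectralForm_congr K fun x _ y _ ↦ ?_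
    rw [sub_self, Real.rpow_zero, Real.rpow_one, one_mul, zero_mul, add_zero, mul_one, sq,
      mul_self_div_self]
  rcases ha.2.eq_or_lt with rfl | ha₂
  · refine (convexOn_spectralForm_sq_div_of_posDef K le_rfl zero_le_one (by norm_num)).congr
      fun p _ ↦ spectralForm_congr K fun x _ y _ ↦ ?_
    rw [Real.rpow_two, zero_mul, zero_add, one_mul, div_eq_mul_inv, ← Real.rpow_neg_one]
    norm_num
  obtain ⟨μ, hμ⟩ := exists_measure_rpow_mul_rpow_eq_integral_sq_div ⟨ha₁, ha₂⟩
  refine convexOn_spectralForm_of_eq_integral (μ := μ.restrict (Set.Ioi 0))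
    (convex_posSemidef.prod convex_posDef) K
    (F := fun u x y ↦ u ^ (a - 2) * (x ^ 2 / (1 * x + u * y)))
    (MeasureTheory.ae_restrict_of_forall_mem measurableSet_Ioi fun u (hu : 0 < u) ↦ ?_)
    fun p hp x hx y hy ↦ ?_
  · rw [spectralForm_const_mul]
    exact (convexOn_spectralForm_sq_div_of_posDef K zero_le_one hu.le (by positivity)).smul
      (by positivity)
  · exact hμ x y (spectrum_nonneg_of_posSemidef hp.1 hx) (spectrum_pos_of_posDef hp.2 hy)

theorem concaveOn_re_trace_rpow_mul_rpow (K : Matrix m n 𝕜) {a : ℝ} (ha : a ∈ Set.Ioc 0 1) :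
    ConcaveOn ℝ ({A : Matrix m m 𝕜 | A.PosSemidef} ×ˢ {B : Matrix n n 𝕜 | B.PosSemidef}) fun p ↦
      RCLike.re
        (Kᴴ * cfc (fun x : ℝ ↦ x ^ a) p.1 * K * cfc (fun x : ℝ ↦ x ^ (1 - a)) p.2).trace :=
  (concaveOn_spectralForm_rpow_mul_rpow K ha).congr fun _ hp ↦
    (re_trace_eq_spectralForm hp.1.isHermitian hp.2.isHermitian _ _ K).symm

theorem convexOn_re_trace_rpow_mul_rpow (K : Matrix m n 𝕜) {a : ℝ} (ha : a ∈ Set.Icc 1 2) :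
    ConvexOn ℝ ({A : Matrix m m 𝕜 | A.PosSemidef} ×ˢ {B : Matrix n n 𝕜 | B.PosDef}) fun p ↦
      RCLike.re
        (Kᴴ * cfc (fun x : ℝ ↦ x ^ a) p.1 * K * cfc (fun x : ℝ ↦ x ^ (1 - a)) p.2).trace :=
  (convexOn_spectralForm_rpow_mul_rpow K ha).congr fun _ hp ↦
    (re_trace_eq_spectralForm hp.1.isHermitian hp.2.isHermitian _ _ K).symm

end LiebAndo

end SpectralForm

section Variational

variable {n 𝕜 : Type*} [Fintype n] [DecidableEq n] [RCLike 𝕜] {H Z : Matrix n n 𝕜}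

lemma mul_rpow_one_sub_sub_le {a x y : ℝ} (ha : a ∈ Set.Ioc 0 1) (hx : 0 ≤ x) (hy : 0 ≤ y) :
    x * y ^ (1 - a) - (1 - a) * y ≤ a * x ^ (1 / a) := by
  have hamgm := Real.geom_mean_le_arith_mean2_weighted ha.1.le (sub_nonneg.2 ha.2)
    (Real.rpow_nonneg hx (1 / a)) hy (add_sub_cancel a 1)
  rwa [← Real.rpow_mul hx, one_div_mul_cancel ha.1.ne', Real.rpow_one,
    ← sub_le_iff_le_add] at hamgm

lemma le_mul_rpow_one_sub_sub {a x y : ℝ} (ha : 1 ≤ a) (hx : 0 ≤ x) (hy : 0 < y) :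
    a * x ^ (1 / a) ≤ x * y ^ (1 - a) - (1 - a) * y := by
  have ha₀ : 0 < a := zero_lt_one.trans_le ha
  have hweight : 0 ≤ 1 - 1 / a := sub_nonneg.2 ((div_le_one ha₀).2 ha)
  have hamgm := Real.geom_mean_le_arith_mean2_weighted (one_div_nonneg.2 ha₀.le) hweight
    (mul_nonneg hx (Real.rpow_nonneg hy.le (1 - a))) hy.le (add_sub_cancel _ _)
  have hcancel : (x * y ^ (1 - a)) ^ (1 / a) * y ^ (1 - 1 / a) = x ^ (1 / a) := by
    rw [Real.mul_rpow hx (Real.rpow_nonneg hy.le _), ← Real.rpow_mul hy.le, mul_assoc,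
      ← Real.rpow_add hy, show (1 - a) * (1 / a) + (1 - 1 / a) = 0 by field_simp; ring,
      Real.rpow_zero, mul_one]
  calc a * x ^ (1 / a) ≤ a * (1 / a * (x * y ^ (1 - a)) + (1 - 1 / a) * y) :=
        mul_le_mul_of_nonneg_left (hcancel ▸ hamgm) ha₀.le
    _ = x * y ^ (1 - a) - (1 - a) * y := by field_simp; ring

lemma mul_rpow_one_div_rpow_one_sub {a x : ℝ} (ha : 0 < a) (hx : 0 ≤ x) :
    x * (x ^ (1 / a)) ^ (1 - a) = x ^ (1 / a) := by
  have hexp : 1 + 1 / a * (1 - a) = 1 / a := by field_simp; ring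
  rw [← Real.rpow_mul hx, ← Real.rpow_one_add' hx (by rw [hexp]; positivity), hexp]

lemma re_trace_mul_cfc_sub_eq_spectralForm (hH : H.IsHermitian) (hZ : Z.IsHermitian) (f : ℝ → ℝ)
    (c : ℝ) :
    RCLike.re (H * cfc f Z).trace - c * RCLike.re Z.trace =
      spectralForm 1 (fun x y ↦ x * f y - c * y) (H, Z) := by
  have hmul := re_trace_eq_spectralForm hH hZ (fun x ↦ x) f 1
  have hsnd := re_trace_eq_spectralForm hH hZ (fun _ ↦ 1) (fun y ↦ y) 1
  simp only [cfc_id' ℝ H hH.isSelfAdjoint, cfc_id' ℝ Z hZ.isSelfAdjoint,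
    cfc_const_one ℝ H hH.isSelfAdjoint, conjTranspose_one, Matrix.mul_one, one_mul] at hmul hsnd
  rw [hmul, hsnd, spectralForm_sub, spectralForm_const_mul]
  rfl

lemma mul_re_trace_cfc_eq_spectralForm (hH : H.IsHermitian) (hZ : Z.IsHermitian) (c : ℝ)
    (f : ℝ → ℝ) :
    c * RCLike.re (cfc f H).trace = spectralForm 1 (fun x _ ↦ c * f x) (H, Z) := by
  have hfst := re_trace_eq_spectralForm hH hZ f (fun _ ↦ 1) 1
  simp only [cfc_const_one ℝ Z hZ.isSelfAdjoint, conjTranspose_one, Matrix.one_mul,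
    mul_one] at hfst
  rw [hfst, spectralForm_const_mul]
  rfl

theorem isGreatest_image_re_trace_mul_rpow_sub (hH : H.PosSemidef) {a : ℝ}
    (ha : a ∈ Set.Ioc 0 1) :
    IsGreatest ((fun Z : Matrix n n 𝕜 ↦ RCLike.re (H * cfc (fun x : ℝ ↦ x ^ (1 - a)) Z).trace -
        (1 - a) * RCLike.re Z.trace) '' {Z | Z.PosSemidef})
      (a * RCLike.re (cfc (fun x : ℝ ↦ x ^ (1 / a)) H).trace) := by
  refine ⟨⟨cfc (fun x : ℝ ↦ x ^ (1 / a)) H, posSemidef_cfc fun x hx ↦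
    Real.rpow_nonneg (spectrum_nonneg_of_posSemidef hH hx) _, ?_⟩, ?_⟩
  · have hpow : ∀ x ∈ spectrum ℝ H, x * (x ^ (1 / a)) ^ (1 - a) = x ^ (1 / a) := fun x hx ↦
      mul_rpow_one_div_rpow_one_sub ha.1 (spectrum_nonneg_of_posSemidef hH hx)
    beta_reduce
    rw [mul_cfc_cfc hH.isHermitian, cfc_congr hpow]
    ring
  · rintro _ ⟨Z, hZ, rfl⟩
    beta_reduce
    rw [re_trace_mul_cfc_sub_eq_spectralForm hH.isHermitian hZ.isHermitian,
      mul_re_trace_cfc_eq_spectralForm hH.isHermitian hZ.isHermitian]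
    exact spectralForm_mono 1 fun x hx y hy ↦ mul_rpow_one_sub_sub_le ha
      (spectrum_nonneg_of_posSemidef hH hx) (spectrum_nonneg_of_posSemidef hZ hy)

lemma re_trace_mul_rpow_sub_le_sum_add_rpow (hH : H.PosSemidef) {a ε : ℝ} (ha : 0 < a)
    (hε : 0 < ε) :
    RCLike.re (H * cfc (fun x : ℝ ↦ x ^ (1 - a)) (cfc (fun x : ℝ ↦ (x + ε) ^ (1 / a)) H)).trace -
        (1 - a) * RCLike.re (cfc (fun x : ℝ ↦ (x + ε) ^ (1 / a)) H).trace ≤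
      a * ∑ i, (hH.isHermitian.eigenvalues i + ε) ^ (1 / a) := by
  have hscalar (x : ℝ) (hx : 0 ≤ x) :
      x * ((x + ε) ^ (1 / a)) ^ (1 - a) ≤ (x + ε) ^ (1 / a) := calc
    x * ((x + ε) ^ (1 / a)) ^ (1 - a) ≤ (x + ε) * ((x + ε) ^ (1 / a)) ^ (1 - a) := by
      gcongr; linarith
    _ = (x + ε) ^ (1 / a) := mul_rpow_one_div_rpow_one_sub ha (by positivity)
  have hsum := Finset.sum_le_sum fun i (_ : i ∈ Finset.univ) ↦
    hscalar _ (hH.eigenvalues_nonneg i)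
  rw [mul_cfc_cfc hH.isHermitian, trace_cfc hH.isHermitian, trace_cfc hH.isHermitian]
  simp only [map_sum, RCLike.ofReal_re]
  linarith

theorem isGLB_image_re_trace_mul_rpow_sub (hH : H.PosSemidef) {a : ℝ} (ha : 1 ≤ a) :
    IsGLB ((fun Z : Matrix n n 𝕜 ↦ RCLike.re (H * cfc (fun x : ℝ ↦ x ^ (1 - a)) Z).trace -
        (1 - a) * RCLike.re Z.trace) '' {Z | Z.PosDef})
      (a * RCLike.re (cfc (fun x : ℝ ↦ x ^ (1 / a)) H).trace) := by
  have ha₀ : 0 < a := zero_lt_one.trans_le ha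
  constructor
  · rintro _ ⟨Z, hZ, rfl⟩
    beta_reduce
    rw [re_trace_mul_cfc_sub_eq_spectralForm hH.isHermitian hZ.isHermitian,
      mul_re_trace_cfc_eq_spectralForm hH.isHermitian hZ.isHermitian]
    exact spectralForm_mono 1 fun x hx y hy ↦ le_mul_rpow_one_sub_sub ha
      (spectrum_nonneg_of_posSemidef hH hx) (spectrum_pos_of_posDef hZ hy)
  · -- The optimal `Z = H ^ (1 / a)` may be singular, so it is approached by `(H + ε) ^ (1 / a)`.
    intro b hb
    have hle (ε : ℝ) (hε : 0 < ε) : b ≤ a * ∑ i, (hH.isHermitian.eigenvalues i + ε) ^ (1 / a) :=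
      (hb ⟨_, posDef_cfc hH.isHermitian fun x hx ↦ Real.rpow_pos_of_pos
        (add_pos_of_nonneg_of_pos (spectrum_nonneg_of_posSemidef hH hx) hε) _, rfl⟩).trans
        (re_trace_mul_rpow_sub_le_sum_add_rpow hH ha₀ hε)
    have hcont : Continuous fun ε : ℝ ↦
        a * ∑ i, (hH.isHermitian.eigenvalues i + ε) ^ (1 / a) :=
      continuous_const.mul <| continuous_finsetSum _ fun i _ ↦
        (continuous_const.add continuous_id).rpow_const fun _ ↦ .inr (by positivity)
    have hlim := ge_of_tendsto (hcont.continuousWithinAt (s := Set.Ioi 0) (x := 0))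
      (eventually_mem_nhdsWithin.mono hle)
    simpa only [add_zero, trace_cfc hH.isHermitian, map_sum, RCLike.ofReal_re] using hlim

end Variational

section KrausMap

variable {ι m n 𝕜 : Type*} [Fintype ι] [Fintype m] [RCLike 𝕜]

/-- The completely positive map with Kraus operators `K i`; it is not required to preserve the
trace. -/
def krausMap (K : ι → Matrix n m 𝕜) (X : Matrix m m 𝕜) : Matrix n n 𝕜 :=
  ∑ i, K i * X * (K i)ᴴ

lemma posSemidef_krausMap [Finite n] (K : ι → Matrix n m 𝕜) {X : Matrix m m 𝕜}
    (hX : X.PosSemidef) : (krausMap K X).PosSemidef :=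
  posSemidef_sum _ fun i _ ↦ hX.mul_mul_conjTranspose_same (K i)

lemma posSemidef_krausMap_rpow [DecidableEq m] [Finite n] (K : ι → Matrix n m 𝕜)
    {A : Matrix m m 𝕜} (hA : A.PosSemidef) (a : ℝ) :
    (krausMap K (cfc (fun x : ℝ ↦ x ^ a) A)).PosSemidef :=
  posSemidef_krausMap K <| posSemidef_cfc fun _ hx ↦
    Real.rpow_nonneg (spectrum_nonneg_of_posSemidef hA hx) a

variable [Fintype n]

lemma re_trace_krausMap_mul (K : ι → Matrix n m 𝕜) (X : Matrix m m 𝕜) (W : Matrix n n 𝕜) :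
    RCLike.re (krausMap K X * W).trace =
      ∑ i, RCLike.re ((K i)ᴴᴴ * X * (K i)ᴴ * W).trace := by
  simp only [krausMap, Finset.sum_mul, trace_sum, map_sum, conjTranspose_conjTranspose]

lemma isLinearMap_mul_re_trace_snd {E : Type*} [AddCommGroup E] [Module ℝ E] (c : ℝ) :
    IsLinearMap ℝ fun p : E × Matrix n n 𝕜 ↦ c * RCLike.re p.2.trace where
  map_add p q := by simp only [Prod.snd_add, trace_add, map_add, mul_add]
  map_smul r p := by
    simp only [Prod.smul_snd, trace_smul, RCLike.smul_re, smul_eq_mul, mul_left_comm]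

variable [DecidableEq m] [DecidableEq n]

lemma concaveOn_re_trace_krausMap_rpow_mul_rpow_sub (K : ι → Matrix n m 𝕜) {a : ℝ}
    (ha : a ∈ Set.Ioc 0 1) (c : ℝ) :
    ConcaveOn ℝ ({A : Matrix m m 𝕜 | A.PosSemidef} ×ˢ {Z : Matrix n n 𝕜 | Z.PosSemidef}) fun p ↦
      RCLike.re (krausMap K (cfc (fun x : ℝ ↦ x ^ a) p.1) *
        cfc (fun x : ℝ ↦ x ^ (1 - a)) p.2).trace - c * RCLike.re p.2.trace := by
  have hs := (convex_posSemidef (m := m) (𝕜 := 𝕜)).prod (convex_posSemidef (m := n) (𝕜 := 𝕜))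
  simp only [re_trace_krausMap_mul]
  exact (concaveOn_sum _ hs fun i _ ↦ concaveOn_re_trace_rpow_mul_rpow (K i)ᴴ ha).sub
    (((isLinearMap_mul_re_trace_snd c).mk' _).convexOn hs)

lemma convexOn_re_trace_krausMap_rpow_mul_rpow_sub (K : ι → Matrix n m 𝕜) {a : ℝ}
    (ha : a ∈ Set.Icc 1 2) (c : ℝ) :
    ConvexOn ℝ ({A : Matrix m m 𝕜 | A.PosSemidef} ×ˢ {Z : Matrix n n 𝕜 | Z.PosDef}) fun p ↦
      RCLike.re (krausMap K (cfc (fun x : ℝ ↦ x ^ a) p.1) *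
        cfc (fun x : ℝ ↦ x ^ (1 - a)) p.2).trace - c * RCLike.re p.2.trace := by
  have hs := (convex_posSemidef (m := m) (𝕜 := 𝕜)).prod (convex_posDef (m := n) (𝕜 := 𝕜))
  simp only [re_trace_krausMap_mul]
  exact (convexOn_sum _ hs fun i _ ↦ convexOn_re_trace_rpow_mul_rpow (K i)ᴴ ha).sub
    (((isLinearMap_mul_re_trace_snd c).mk' _).concaveOn hs)

theorem concaveOn_re_trace_krausMap_rpow (K : ι → Matrix n m 𝕜) {a : ℝ} (ha : a ∈ Set.Ioc 0 1) :
    ConcaveOn ℝ {A : Matrix m m 𝕜 | A.PosSemidef} fun A ↦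
      RCLike.re (cfc (fun x : ℝ ↦ x ^ (1 / a)) (krausMap K (cfc (fun x : ℝ ↦ x ^ a) A))).trace := by
  have hmax : ConcaveOn ℝ {A : Matrix m m 𝕜 | A.PosSemidef} fun A ↦ a * RCLike.re
      (cfc (fun x : ℝ ↦ x ^ (1 / a)) (krausMap K (cfc (fun x : ℝ ↦ x ^ a) A))).trace :=
    concaveOn_of_isGreatest_image convex_posSemidef
      (concaveOn_re_trace_krausMap_rpow_mul_rpow_sub K ha (1 - a)) fun A hA ↦
        isGreatest_image_re_trace_mul_rpow_sub (posSemidef_krausMap_rpow K hA a) ha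
  simpa only [Pi.smul_def, smul_eq_mul, inv_mul_cancel_left₀ ha.1.ne'] using
    hmax.smul (inv_nonneg.2 ha.1.le)

theorem convexOn_re_trace_krausMap_rpow (K : ι → Matrix n m 𝕜) {a : ℝ} (ha : a ∈ Set.Icc 1 2) :
    ConvexOn ℝ {A : Matrix m m 𝕜 | A.PosSemidef} fun A ↦
      RCLike.re (cfc (fun x : ℝ ↦ x ^ (1 / a)) (krausMap K (cfc (fun x : ℝ ↦ x ^ a) A))).trace := by
  have ha₀ : 0 < a := zero_lt_one.trans_le ha.1
  have hmin : ConvexOn ℝ {A : Matrix m m 𝕜 | A.PosSemidef} fun A ↦ a * RCLike.re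
      (cfc (fun x : ℝ ↦ x ^ (1 / a)) (krausMap K (cfc (fun x : ℝ ↦ x ^ a) A))).trace :=
    convexOn_of_isGLB_image convex_posSemidef
      (convexOn_re_trace_krausMap_rpow_mul_rpow_sub K ha (1 - a)) fun A hA ↦
        isGLB_image_re_trace_mul_rpow_sub (posSemidef_krausMap_rpow K hA a) ha.1
  simpa only [Pi.smul_def, smul_eq_mul, inv_mul_cancel_left₀ ha₀.ne'] using
    hmin.smul (inv_nonneg.2 ha₀.le)

end KrausMap

theorem stmt_9_general {ι m n 𝕜 : Type*} [Fintype ι] [Fintype m] [DecidableEq m] [Fintype n]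
    [DecidableEq n] [RCLike 𝕜] (K : ι → Matrix n m 𝕜) :
    (∀ a ∈ Set.Ioc (0 : ℝ) 1, ConcaveOn ℝ {A : Matrix m m 𝕜 | A.PosSemidef} fun A ↦
      RCLike.re (cfc (fun x : ℝ ↦ x ^ (1 / a)) (krausMap K (cfc (fun x : ℝ ↦ x ^ a) A))).trace) ∧
    (∀ a ∈ Set.Icc (1 : ℝ) 2, ConvexOn ℝ {A : Matrix m m 𝕜 | A.PosSemidef} fun A ↦
      RCLike.re (cfc (fun x : ℝ ↦ x ^ (1 / a)) (krausMap K (cfc (fun x : ℝ ↦ x ^ a) A))).trace) :=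
  ⟨fun _ ↦ concaveOn_re_trace_krausMap_rpow K, fun _ ↦ convexOn_re_trace_krausMap_rpow K⟩

/-- For a CPTP map `E`, the function `A ↦ Tr((E(A^a))^(1/a))` is concave on positive
definite matrices for `a ∈ (0,1]` and convex on positive definite matrices for
`a ∈ [1,2]`. -/
theorem stmt_9 {d : ℕ}
    (E : Matrix (Fin d) (Fin d) ℂ →ₗ[ℂ] Matrix (Fin d) (Fin d) ℂ)
    (hKraus : ∃ (n : ℕ) (K : Fin n → Matrix (Fin d) (Fin d) ℂ),
      (∀ X, E X = ∑ i, K i * X * (K i)ᴴ) ∧ ∑ i, (K i)ᴴ * K i = 1) :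
    (∀ a ∈ Set.Ioc (0 : ℝ) 1, ∀ A B : Matrix (Fin d) (Fin d) ℂ,
      A.PosDef → B.PosDef → ∀ t : ℝ, t ∈ Set.Icc (0 : ℝ) 1 →
      t * ((mpow (E (mpow A a)) (1 / a)).trace).re
          + (1 - t) * ((mpow (E (mpow B a)) (1 / a)).trace).re
        ≤ ((mpow (E (mpow ((t : ℂ) • A + ((1 - t : ℝ) : ℂ) • B) a)) (1 / a)).trace).re) ∧
    (∀ a ∈ Set.Icc (1 : ℝ) 2, ∀ A B : Matrix (Fin d) (Fin d) ℂ,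
      A.PosDef → B.PosDef → ∀ t : ℝ, t ∈ Set.Icc (0 : ℝ) 1 →
      ((mpow (E (mpow ((t : ℂ) • A + ((1 - t : ℝ) : ℂ) • B) a)) (1 / a)).trace).re
        ≤ t * ((mpow (E (mpow A a)) (1 / a)).trace).re
          + (1 - t) * ((mpow (E (mpow B a)) (1 / a)).trace).re) := by
  obtain ⟨n, K, hE, -⟩ := hKraus
  obtain hE : ⇑E = krausMap K := funext hE
  simp only [hE, mpow, Complex.coe_smul]
  exact ⟨fun a ha A B hA hB t ht ↦ ((stmt_9_general K).1 a ha).2 hA.posSemidef hB.posSemidef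
      ht.1 (sub_nonneg.2 ht.2) (add_sub_cancel t 1),
    fun a ha A B hA hB t ht ↦ ((stmt_9_general K).2 a ha).2 hA.posSemidef hB.posSemidef
      ht.1 (sub_nonneg.2 ht.2) (add_sub_cancel t 1)⟩
end

section
/- Fix an orthonormal basis {|i⟩}_{i=1}^d of ℂ^d, let a ∈ (0,1)∪(1,2], and let ρ be a positive definite density matrix. Then the infimum over all diagonal (in the fixed basis) positive definite density matrices δ of S̃_a(ρ|δ) equals ((Σ_{i=1}^d ⟨i|ρ^a|i⟩^{1/a}) − 1)/(a − 1), where ⟨i|ρ^a|i⟩ denotes the i-th diagonal entry of ρ^a. -/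
open Matrix
open scoped ComplexOrder

/-!
For `δ = ∑ i, g i • |i⟩⟨i|` one has `Tr (ρ^a δ^(1-a)) = ∑ i, g i ^ (1 - a) * c i` with
`c i = ⟨i|ρ^a|i⟩ > 0`, so the problem is a minimisation over probability vectors `g`. Put
`z i = c i ^ (1 / a) / g i`. Then `(Tr (ρ^a δ^(1-a)))^(1/a)` is the `g`-weighted power mean of `z`
of exponent `a`, while the `g`-weighted arithmetic mean of `z` is `∑ i, c i ^ (1 / a)`, which does
not depend on `g`. Power means increase with the exponent, so the difference of the two means has
the sign of `a - 1`; it vanishes when `z` is constant, i.e. when `g` is proportional to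
`c ^ (1 / a)`.
-/

section PowerMeans

/-- The relative interior of the probability simplex, i.e. the strictly positive probability vectors
on `ι`. They parametrise the positive definite density matrices diagonal in a given basis. -/
def openSimplex (ι : Type*) [Fintype ι] : Set (ι → ℝ) :=
  {g | (∀ i, 0 < g i) ∧ ∑ i, g i = 1}

variable {ι : Type*}

theorem rpow_arith_mean_le_arith_mean_rpow_of_nonpos (s : Finset ι) (w z : ι → ℝ)
    (hw : ∀ i ∈ s, 0 ≤ w i) (hw' : ∑ i ∈ s, w i = 1) (hz : ∀ i ∈ s, 0 < z i)
    {p : ℝ} (hp : p ≤ 0) :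
    (∑ i ∈ s, w i * z i) ^ p ≤ ∑ i ∈ s, w i * z i ^ p := by
  have hgeom : 0 < ∏ i ∈ s, z i ^ w i :=
    Finset.prod_pos fun i hi => Real.rpow_pos_of_pos (hz i hi) _
  calc (∑ i ∈ s, w i * z i) ^ p
      ≤ (∏ i ∈ s, z i ^ w i) ^ p :=
        Real.rpow_le_rpow_of_nonpos hgeom
          (Real.geom_mean_le_arith_mean_weighted s w z hw hw' fun i hi => (hz i hi).le) hp
    _ = ∏ i ∈ s, (z i ^ p) ^ w i := by
        rw [← Real.finsetProd_rpow s _ fun i hi => Real.rpow_nonneg (hz i hi).le _]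
        exact Finset.prod_congr rfl fun i hi => by
          rw [← Real.rpow_mul (hz i hi).le, ← Real.rpow_mul (hz i hi).le, mul_comm]
    _ ≤ ∑ i ∈ s, w i * z i ^ p :=
        Real.geom_mean_le_arith_mean_weighted s w _ hw hw' fun i hi =>
          Real.rpow_nonneg (hz i hi).le _

theorem rpow_mean_le_arith_mean (s : Finset ι) (w z : ι → ℝ)
    (hw : ∀ i ∈ s, 0 ≤ w i) (hw' : ∑ i ∈ s, w i = 1) (hz : ∀ i ∈ s, 0 < z i)
    {p : ℝ} (hp₀ : p ≠ 0) (hp₁ : p ≤ 1) :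
    (∑ i ∈ s, w i * z i ^ p) ^ (1 / p) ≤ ∑ i ∈ s, w i * z i := by
  have harith : 0 ≤ ∑ i ∈ s, w i * z i :=
    Finset.sum_nonneg fun i hi => mul_nonneg (hw i hi) (hz i hi).le
  rcases hp₀.lt_or_gt with hp | hp
  · obtain ⟨j, hj, hwj⟩ : ∃ j ∈ s, 0 < w j := Finset.exists_lt_of_sum_lt (by simp [hw'])
    have harith_pos : 0 < ∑ i ∈ s, w i * z i :=
      Finset.sum_pos' (fun i hi => mul_nonneg (hw i hi) (hz i hi).le)
        ⟨j, hj, mul_pos hwj (hz j hj)⟩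
    calc (∑ i ∈ s, w i * z i ^ p) ^ (1 / p)
        ≤ ((∑ i ∈ s, w i * z i) ^ p) ^ (1 / p) :=
          Real.rpow_le_rpow_of_nonpos (Real.rpow_pos_of_pos harith_pos p)
            (rpow_arith_mean_le_arith_mean_rpow_of_nonpos s w z hw hw' hz hp.le)
            (one_div_nonpos.2 hp.le)
      _ = ∑ i ∈ s, w i * z i := by rw [one_div, Real.rpow_rpow_inv harith hp₀]
  · calc (∑ i ∈ s, w i * z i ^ p) ^ (1 / p)
        ≤ ∑ i ∈ s, w i * (z i ^ p) ^ (1 / p) :=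
          Real.rpow_arith_mean_le_arith_mean_rpow s w _ hw hw'
            (fun i hi => Real.rpow_nonneg (hz i hi).le _) ((one_le_div hp).2 hp₁)
      _ = ∑ i ∈ s, w i * z i :=
          Finset.sum_congr rfl fun i hi => by
            rw [one_div, Real.rpow_rpow_inv (hz i hi).le hp₀]

theorem mul_rpow_one_div_div_rpow {a x y : ℝ} (ha : a ≠ 0) (hx : 0 ≤ x) (hy : 0 < y) :
    y * (x ^ (1 / a) / y) ^ a = y ^ (1 - a) * x := by
  rw [Real.div_rpow (Real.rpow_nonneg hx _) hy.le, one_div, Real.rpow_inv_rpow hx ha,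
    Real.rpow_sub hy, Real.rpow_one]
  ring

variable [Fintype ι]

theorem sum_rpow_sub_one_div_le {a : ℝ} (ha₀ : a ≠ 0) (ha₁ : a ≠ 1) {c g : ι → ℝ}
    (hc : ∀ i, 0 < c i) (hg : g ∈ openSimplex ι) :
    (∑ i, c i ^ (1 / a) - 1) / (a - 1) ≤
      ((∑ i, g i ^ (1 - a) * c i) ^ (1 / a) - 1) / (a - 1) := by
  obtain ⟨hg, hg_sum⟩ := hg
  let z : ι → ℝ := fun i => c i ^ (1 / a) / g i
  have hz : ∀ i, 0 < z i := fun i => div_pos (Real.rpow_pos_of_pos (hc i) _) (hg i)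
  have harith : ∑ i, c i ^ (1 / a) = ∑ i, g i * z i :=
    Finset.sum_congr rfl fun i _ => (mul_div_cancel₀ _ (hg i).ne').symm
  have hpow : ∑ i, g i ^ (1 - a) * c i = ∑ i, g i * z i ^ a :=
    Finset.sum_congr rfl fun i _ => (mul_rpow_one_div_div_rpow ha₀ (hc i).le (hg i)).symm
  rw [harith, hpow]
  rcases ha₁.lt_or_gt with ha | ha
  · refine div_le_div_of_nonpos_of_le (sub_nonpos.2 ha.le) (sub_le_sub_right ?_ 1)
    exact rpow_mean_le_arith_mean _ g z (fun i _ => (hg i).le) hg_sum (fun i _ => hz i) ha₀ ha.le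
  · refine div_le_div_of_nonneg_right (sub_le_sub_right ?_ 1) (sub_nonneg.2 ha.le)
    exact Real.arith_mean_le_rpow_mean _ g z (fun i _ => (hg i).le) hg_sum
      (fun i _ => (hz i).le) ha.le

variable [Nonempty ι]

theorem div_sum_mem_openSimplex {x : ι → ℝ} (hx : ∀ i, 0 < x i) :
    (fun i => x i / ∑ j, x j) ∈ openSimplex ι := by
  have hsum : 0 < ∑ j, x j := Finset.sum_pos (fun i _ => hx i) Finset.univ_nonempty
  exact ⟨fun i => div_pos (hx i) hsum, by rw [← Finset.sum_div, div_self hsum.ne']⟩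

theorem sum_div_sum_rpow_mul_rpow {a : ℝ} (ha : a ≠ 0) {c : ι → ℝ} (hc : ∀ i, 0 < c i) :
    (∑ i, (c i ^ (1 / a) / ∑ j, c j ^ (1 / a)) ^ (1 - a) * c i) ^ (1 / a) =
      ∑ i, c i ^ (1 / a) := by
  have hx : ∀ i, 0 < c i ^ (1 / a) := fun i => Real.rpow_pos_of_pos (hc i) _
  obtain ⟨hg, hg_sum⟩ := div_sum_mem_openSimplex hx
  have hS : 0 < ∑ j, c j ^ (1 / a) := Finset.sum_pos (fun i _ => hx i) Finset.univ_nonempty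
  set S := ∑ j, c j ^ (1 / a)
  have hterm : ∀ i, (c i ^ (1 / a) / S) ^ (1 - a) * c i = c i ^ (1 / a) / S * S ^ a := fun i => by
    rw [← mul_rpow_one_div_div_rpow ha (hc i).le (hg i), div_div_cancel₀ (hx i).ne']
  rw [Finset.sum_congr rfl fun i _ => hterm i, ← Finset.sum_mul, hg_sum, one_mul, one_div,
    Real.rpow_rpow_inv hS.le ha]

theorem isLeast_image_openSimplex {a : ℝ} (ha₀ : a ≠ 0) (ha₁ : a ≠ 1) {c : ι → ℝ}
    (hc : ∀ i, 0 < c i) :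
    IsLeast ((fun g : ι → ℝ => ((∑ i, g i ^ (1 - a) * c i) ^ (1 / a) - 1) / (a - 1)) ''
      openSimplex ι) ((∑ i, c i ^ (1 / a) - 1) / (a - 1)) := by
  constructor
  · refine ⟨_, div_sum_mem_openSimplex fun i => Real.rpow_pos_of_pos (hc i) (1 / a), ?_⟩
    simp only [sum_div_sum_rpow_mul_rpow ha₀ hc]
  · rintro _ ⟨g, hg, rfl⟩
    exact sum_rpow_sub_one_div_le ha₀ ha₁ hc hg

end PowerMeans

section FunctionalCalculus

theorem cfc_algHom_pi {ι A : Type*} [Finite ι] [Ring A] [StarRing A] [TopologicalSpace A]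
    [Algebra ℝ A] {p : A → Prop} [ContinuousFunctionalCalculus ℝ A p]
    (φ : (ι → ℝ) →ₐ[ℝ] A) (g : ι → ℝ) (hg : p (φ g)) (h : ℝ → ℝ) :
    cfc h (φ g) = φ (h ∘ g) := by
  classical
  cases nonempty_fintype ι
  let q := Lagrange.interpolate (Finset.univ.image g) id h
  have hq : ∀ i, q.eval (g i) = h (g i) := fun i =>
    Lagrange.eval_interpolate_at_node (v := id) h Function.injective_id.injOn
      (Finset.mem_image_of_mem g (Finset.mem_univ i))
  have hspec : Set.EqOn h q.eval (spectrum ℝ (φ g)) := fun x hx => by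
    have hx' := AlgHom.spectrum_apply_subset φ g hx
    simp only [Pi.spectrum_eq, Set.mem_iUnion] at hx'
    obtain ⟨i, hi⟩ := hx'
    obtain rfl : x = g i := (spectrum.scalar_eq (𝕜 := ℝ) (g i)).subset hi
    exact (hq i).symm
  calc cfc h (φ g) = Polynomial.aeval (φ g) q := by rw [cfc_congr hspec, cfc_polynomial q _ hg]
    _ = φ (Polynomial.aeval g q) := Polynomial.aeval_algHom_apply φ g q
    _ = φ (h ∘ g) := congrArg φ <| funext fun i => by
        rw [Polynomial.aeval_pi_apply₂, Polynomial.coe_aeval_eq_eval, hq, Function.comp_apply]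

variable {n 𝕜 : Type*} [Fintype n] [DecidableEq n] [RCLike 𝕜]

theorem cfc_unitary_conj_diagonal (U : unitaryGroup n 𝕜) (g : n → ℝ) (h : ℝ → ℝ) :
    cfc h ((U : Matrix n n 𝕜) * diagonal (fun i => (g i : 𝕜)) * star (U : Matrix n n 𝕜)) =
      U * diagonal (fun i => (h (g i) : 𝕜)) * star (U : Matrix n n 𝕜) := by
  let φ : (n → ℝ) →ₐ[ℝ] Matrix n n 𝕜 :=
    ((Unitary.conjStarAlgAut ℝ (Matrix n n 𝕜) U).toAlgEquiv.toAlgHom.comp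
      (diagonalAlgHom ℝ)).comp ((Algebra.ofId ℝ 𝕜).compLeft n)
  have hg : IsSelfAdjoint (φ g) := by
    have hdiag : IsSelfAdjoint (diagonal fun i => (g i : 𝕜)) := by
      rw [IsSelfAdjoint, star_eq_conjTranspose, diagonal_conjTranspose]
      exact congrArg diagonal (funext fun i => RCLike.conj_ofReal (g i))
    exact hdiag.conjugate (U : Matrix n n 𝕜)
  exact cfc_algHom_pi φ g hg h

theorem posDef_unitary_conj_diagonal_iff (U : unitaryGroup n 𝕜) (f : n → 𝕜) :
    ((U : Matrix n n 𝕜) * diagonal f * star (U : Matrix n n 𝕜)).PosDef ↔ ∀ i, 0 < f i := by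
  rw [IsUnit.posDef_star_right_conjugate_iff (Unitary.isUnit_coe), posDef_diagonal_iff]

theorem posDef_cfc_iff {A : Matrix n n 𝕜} (hA : A.IsHermitian) (h : ℝ → ℝ) :
    (cfc h A).PosDef ↔ ∀ i, 0 < h (hA.eigenvalues i) := by
  rw [hA.cfc_eq, IsHermitian.cfc, Unitary.conjStarAlgAut_apply, posDef_unitary_conj_diagonal_iff]
  simp only [Function.comp_apply, RCLike.ofReal_pos]

end FunctionalCalculus

section RankOneSums

variable {ι n R : Type*} [Fintype ι] [CommSemiring R]

theorem sum_smul_vecMulVec [DecidableEq ι] (f : ι → R) (v w : ι → n → R) :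
    ∑ i, f i • vecMulVec (v i) (w i) = (of v)ᵀ * diagonal f * of w := by
  ext j k
  simp only [Matrix.sum_apply, Matrix.smul_apply, vecMulVec_apply, smul_eq_mul]
  rw [mul_apply]
  simp only [mul_diagonal, transpose_apply, of_apply]
  exact Finset.sum_congr rfl fun i _ => by ring

variable [Fintype n]

theorem trace_mul_sum_smul_vecMulVec (M : Matrix n n R) (f : ι → R) (v w : ι → n → R) :
    (M * ∑ i, f i • vecMulVec (v i) (w i)).trace = ∑ i, f i * (w i ⬝ᵥ M *ᵥ v i) := by
  simp only [Finset.mul_sum, trace_sum, Matrix.mul_smul, trace_smul, mul_vecMulVec,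
    trace_vecMulVec, smul_eq_mul, dotProduct_comm (M *ᵥ _)]

theorem trace_sum_smul_vecMulVec (f : ι → R) {v w : ι → n → R} (hvw : ∀ i, w i ⬝ᵥ v i = 1) :
    (∑ i, f i • vecMulVec (v i) (w i)).trace = ∑ i, f i := by
  simp only [trace_sum, trace_smul, trace_vecMulVec, dotProduct_comm (v _), hvw, smul_eq_mul,
    mul_one]

end RankOneSums

section OrthonormalBasis

variable {n 𝕜 : Type*} [Fintype n] [DecidableEq n]

theorem transpose_mem_unitaryGroup_of_orthonormal [CommRing 𝕜] [StarRing 𝕜] {v : n → n → 𝕜}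
    (hv : ∀ i j, star (v i) ⬝ᵥ v j = if i = j then 1 else 0) :
    (of v)ᵀ ∈ unitaryGroup n 𝕜 := by
  rw [mem_unitaryGroup_iff']
  ext i j
  rw [one_apply, ← hv i j]
  rfl

variable [RCLike 𝕜] {v : n → n → 𝕜}

theorem posDef_sum_smul_vecMulVec_star_iff
    (hv : ∀ i j, star (v i) ⬝ᵥ v j = if i = j then 1 else 0) (f : n → 𝕜) :
    (∑ i, f i • vecMulVec (v i) (star (v i))).PosDef ↔ ∀ i, 0 < f i := by
  rw [sum_smul_vecMulVec]
  exact posDef_unitary_conj_diagonal_iff ⟨_, transpose_mem_unitaryGroup_of_orthonormal hv⟩ f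

theorem cfc_sum_smul_vecMulVec_star
    (hv : ∀ i j, star (v i) ⬝ᵥ v j = if i = j then 1 else 0) (g : n → ℝ) (h : ℝ → ℝ) :
    cfc h (∑ i, (g i : 𝕜) • vecMulVec (v i) (star (v i))) =
      ∑ i, (h (g i) : 𝕜) • vecMulVec (v i) (star (v i)) := by
  rw [sum_smul_vecMulVec, sum_smul_vecMulVec]
  exact cfc_unitary_conj_diagonal ⟨_, transpose_mem_unitaryGroup_of_orthonormal hv⟩ g h

theorem diagonal_density_iff_exists_openSimplex
    (hv : ∀ i j, star (v i) ⬝ᵥ v j = if i = j then 1 else 0) (δ : Matrix n n 𝕜) :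
    (δ.PosDef ∧ δ.trace = 1 ∧ ∃ f : n → 𝕜, δ = ∑ i, f i • vecMulVec (v i) (star (v i))) ↔
      ∃ g ∈ openSimplex n, δ = ∑ i, (g i : 𝕜) • vecMulVec (v i) (star (v i)) := by
  constructor
  · rintro ⟨hpos, htrace, f, rfl⟩
    rw [posDef_sum_smul_vecMulVec_star_iff hv] at hpos
    rw [trace_sum_smul_vecMulVec _ fun i => (hv i i).trans (if_pos rfl)] at htrace
    have hreal : ∀ i, ((RCLike.re (f i) : ℝ) : 𝕜) = f i := fun i =>
      RCLike.conj_eq_iff_re.1 (RCLike.conj_eq_iff_im.2 (RCLike.pos_iff.1 (hpos i)).2)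
    refine ⟨fun i => RCLike.re (f i), ⟨fun i => (RCLike.pos_iff.1 (hpos i)).1, ?_⟩, ?_⟩
    · rw [← map_sum, htrace, RCLike.one_re]
    · simp only [hreal]
  · rintro ⟨g, ⟨hg, hg_sum⟩, rfl⟩
    refine ⟨(posDef_sum_smul_vecMulVec_star_iff hv _).2 fun i => RCLike.ofReal_pos.2 (hg i), ?_,
      _, rfl⟩
    rw [trace_sum_smul_vecMulVec _ fun i => (hv i i).trans (if_pos rfl), ← RCLike.ofReal_sum,
      hg_sum, RCLike.ofReal_one]

end OrthonormalBasis

section Tsallis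

variable {d : ℕ}

theorem posDef_mpow {A : Matrix (Fin d) (Fin d) ℂ} (hA : A.PosDef) (t : ℝ) : (mpow A t).PosDef :=
  (posDef_cfc_iff hA.isHermitian _).2 fun i => Real.rpow_pos_of_pos (hA.eigenvalues_pos i) t

variable {v : Fin d → Fin d → ℂ}

theorem tsallis_sum_smul_vecMulVec_star
    (hv : ∀ i j, star (v i) ⬝ᵥ v j = if i = j then 1 else 0)
    (a : ℝ) (ρ : Matrix (Fin d) (Fin d) ℂ) (g : Fin d → ℝ) :
    tsallis a ρ (∑ i, (g i : ℂ) • vecMulVec (v i) (star (v i))) =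
      ((∑ i, g i ^ (1 - a) * (star (v i) ⬝ᵥ mpow ρ a *ᵥ v i).re) ^ (1 / a) - 1) / (a - 1) := by
  have hpow : mpow (∑ i, (g i : ℂ) • vecMulVec (v i) (star (v i))) (1 - a) =
      ∑ i, ((g i ^ (1 - a) : ℝ) : ℂ) • vecMulVec (v i) (star (v i)) :=
    cfc_sum_smul_vecMulVec_star hv g _
  rw [tsallis, hpow, trace_mul_sum_smul_vecMulVec]
  simp only [Complex.re_sum, Complex.re_ofReal_mul]

theorem range_tsallis_diagonal
    (hv : ∀ i j, star (v i) ⬝ᵥ v j = if i = j then 1 else 0)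
    (a : ℝ) (ρ : Matrix (Fin d) (Fin d) ℂ) :
    Set.range (fun δ : {δ : Matrix (Fin d) (Fin d) ℂ // δ.PosDef ∧ δ.trace = 1 ∧
        ∃ f : Fin d → ℂ, δ = ∑ i, f i • vecMulVec (v i) (star (v i))} => tsallis a ρ δ) =
      (fun g : Fin d → ℝ =>
        ((∑ i, g i ^ (1 - a) * (star (v i) ⬝ᵥ mpow ρ a *ᵥ v i).re) ^ (1 / a) - 1) / (a - 1)) ''
        openSimplex (Fin d) := by
  ext t
  simp only [Set.mem_range, Subtype.exists, exists_prop, Set.mem_image,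
    diagonal_density_iff_exists_openSimplex hv]
  constructor
  · rintro ⟨_, ⟨g, hg, rfl⟩, rfl⟩
    exact ⟨g, hg, (tsallis_sum_smul_vecMulVec_star hv a ρ g).symm⟩
  · rintro ⟨g, hg, rfl⟩
    exact ⟨_, ⟨g, hg, rfl⟩, tsallis_sum_smul_vecMulVec_star hv a ρ g⟩

end Tsallis

theorem stmt_15_general {d : ℕ} [NeZero d]
    (v : Fin d → (Fin d → ℂ))
    (honb : ∀ i j, star (v i) ⬝ᵥ v j = if i = j then 1 else 0)
    (P : Fin d → Matrix (Fin d) (Fin d) ℂ)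
    (hP : ∀ i, P i = vecMulVec (v i) (star (v i)))
    (a : ℝ) (ha₀ : a ≠ 0) (ha₁ : a ≠ 1)
    (ρ : Matrix (Fin d) (Fin d) ℂ) (hρ : ρ.PosDef) :
    IsLeast (Set.range fun δ : {δ : Matrix (Fin d) (Fin d) ℂ //
        δ.PosDef ∧ δ.trace = 1 ∧ ∃ f : Fin d → ℂ, δ = ∑ i, f i • P i} =>
        tsallis a ρ (δ : Matrix (Fin d) (Fin d) ℂ))
      (((∑ i, ((star (v i) ⬝ᵥ (mpow ρ a).mulVec (v i)).re) ^ (1 / a)) - 1) / (a - 1)) := by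
  obtain rfl : P = fun i => vecMulVec (v i) (star (v i)) := funext hP
  have hv₀ : ∀ i, v i ≠ 0 := fun i hi => by simpa [hi] using honb i i
  have hdiag : ∀ i, 0 < (star (v i) ⬝ᵥ mpow ρ a *ᵥ v i).re := fun i =>
    (Complex.lt_def.1 ((posDef_mpow hρ a).dotProduct_mulVec_pos (hv₀ i))).1
  rw [range_tsallis_diagonal honb]
  exact isLeast_image_openSimplex ha₀ ha₁ hdiag

/-- Coherence: for an orthonormal basis `{v i}` with rank-one projections
`P i = |i⟩⟨i|`, `a ∈ (0,1) ∪ (1,2]` and a positive definite density matrix `ρ`,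
the infimum of `S̃_a(ρ|δ)` over positive definite density matrices `δ` that are
diagonal in the basis equals `((Σ_i ⟨i|ρ^a|i⟩^(1/a)) - 1)/(a - 1)`. -/
theorem stmt_15 {d : ℕ}
    (v : Fin d → (Fin d → ℂ))
    (honb : ∀ i j, star (v i) ⬝ᵥ v j = if i = j then 1 else 0)
    (P : Fin d → Matrix (Fin d) (Fin d) ℂ)
    (hP : ∀ i, P i = vecMulVec (v i) (star (v i)))
    (a : ℝ) (ha : a ∈ Set.Ioo (0 : ℝ) 1 ∪ Set.Ioc (1 : ℝ) 2)
    (ρ : Matrix (Fin d) (Fin d) ℂ) (hρ : ρ.PosDef) (hρtr : ρ.trace = 1) :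
    (⨅ δ : {δ : Matrix (Fin d) (Fin d) ℂ //
        δ.PosDef ∧ δ.trace = 1 ∧ ∃ f : Fin d → ℂ, δ = ∑ i, f i • P i},
        tsallis a ρ (δ : Matrix (Fin d) (Fin d) ℂ))
      = ((∑ i, ((star (v i) ⬝ᵥ (mpow ρ a).mulVec (v i)).re) ^ (1 / a)) - 1)
          / (a - 1) := by
  have : NeZero d := ⟨by rintro rfl; simp at hρtr⟩
  obtain ⟨ha₀, ha₁⟩ : a ≠ 0 ∧ a ≠ 1 := by
    rcases ha with ⟨h₀, h₁⟩ | ⟨h₁, -⟩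
    · exact ⟨h₀.ne', h₁.ne⟩
    · exact ⟨(zero_lt_one.trans h₁).ne', h₁.ne'⟩
  exact (stmt_15_general v honb P hP a ha₀ ha₁ ρ hρ).csInf_eq
end

section
/- Let G be a finite group, U : G → U(d) a unitary representation on ℂ^d, and define the twirling map E(ρ) = (1/|G|) Σ_{g∈G} U(g) ρ U(g)†. Let a ∈ (0,1)∪(1,2] and let ρ be a positive definite density matrix. Then the infimum over all positive definite density matrices σ satisfying U(g) σ U(g)† = σ for all g ∈ G of S̃_a(ρ|σ) equals (Tr((E(ρ^a))^{1/a}) − 1)/(a − 1). -/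
open Matrix
open scoped ComplexOrder

/-!
Averaging over the group does not change the trace against an invariant matrix, so on invariant
states `σ` the trace `Tr (ρ^a σ^(1-a))` equals `Tr (X σ^(1-a))` with `X = E(ρ^a)`. Writing
`X = A^a`, Hölder's inequality `Tr (A^a σ^(1-a)) ≤ (Tr A)^a (Tr σ)^(1-a)` for `a < 1`, and its
reverse for `a > 1`, bound the entropy below over *all* states, and equality holds at the multiple
of `A = X^(1/a)` of trace one, which is itself invariant. Hölder's inequality for such traces
reduces to the one for finite sums: in eigenbases `u`, `v` of `A`, `B` with eigenvalues `p`, `q`,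
one has `Tr (f(A) g(B)) = ∑ i j, |⟨u i, v j⟩|² f(p i) g(q j)`.
-/

section Holder

variable {ι : Type*} {s : Finset ι} {w f g : ι → ℝ} {a : ℝ}

lemma sum_mul_rpow_mul_rpow_le (hw : ∀ i, 0 ≤ w i) (hf : ∀ i, 0 ≤ f i) (hg : ∀ i, 0 ≤ g i)
    (ha0 : 0 < a) (ha1 : a < 1) :
    ∑ i ∈ s, w i * (f i ^ a * g i ^ (1 - a)) ≤
      (∑ i ∈ s, w i * f i) ^ a * (∑ i ∈ s, w i * g i) ^ (1 - a) := by
  have hwf i : 0 ≤ w i * f i := mul_nonneg (hw i) (hf i)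
  have hwg i : 0 ≤ w i * g i := mul_nonneg (hw i) (hg i)
  have holder := Real.inner_le_Lp_mul_Lq_of_nonneg s
    (Real.HolderConjugate.inv_one_sub_inv ha0 ha1)
    (fun i _ => Real.rpow_nonneg (hwf i) a) (fun i _ => Real.rpow_nonneg (hwg i) (1 - a))
  simp only [one_div, inv_inv, Real.rpow_rpow_inv (hwf _) ha0.ne',
    Real.rpow_rpow_inv (hwg _) (sub_pos.2 ha1).ne'] at holder
  convert holder using 2 with i
  have hsplit : w i = w i ^ a * w i ^ (1 - a) := by
    rw [← Real.rpow_add' (hw i) (by simp), add_sub_cancel, Real.rpow_one]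
  rw [Real.mul_rpow (hw i) (hf i), Real.mul_rpow (hw i) (hg i), mul_mul_mul_comm, ← hsplit]

lemma sum_mul_le_rpow_sum_mul_rpow_mul_rpow (hw : ∀ i, 0 ≤ w i) (hf : ∀ i, 0 ≤ f i)
    (hg : ∀ i, 0 < g i) (ha : 1 ≤ a) :
    ∑ i ∈ s, w i * f i ≤
      (∑ i ∈ s, w i * g i) ^ (1 - a⁻¹) * (∑ i ∈ s, w i * (f i ^ a * g i ^ (1 - a))) ^ a⁻¹ := by
  have hdiv i : w i * g i * (f i / g i) = w i * f i := by
    rw [mul_assoc, mul_div_cancel₀ _ (hg i).ne']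
  have hrpow i : w i * g i * (f i / g i) ^ a = w i * (f i ^ a * g i ^ (1 - a)) := by
    rw [Real.rpow_sub (hg i), Real.rpow_one, Real.div_rpow (hf i) (hg i).le]
    ring
  simpa only [hdiv, hrpow] using
    Real.inner_le_weight_mul_Lp_of_nonneg s ha (fun i => w i * g i) (fun i => f i / g i)
      (fun i => mul_nonneg (hw i) (hg i).le) (fun i => div_nonneg (hf i) (hg i).le)

end Holder

section StarAlgebra

lemma unitary_mul_mul_star_eq_iff_commute {R : Type*} [Monoid R] [StarMul R] (V : unitary R)
    (x : R) : (V : R) * x * star (V : R) = x ↔ Commute x V :=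
  eq_comm.trans (Units.eq_mul_inv_iff_mul_eq (Unitary.toUnits V))

variable {A : Type*} [Ring A] [StarRing A] [TopologicalSpace A] [PartialOrder A]
  [StarOrderedRing A] [Algebra ℝ A] [ContinuousFunctionalCalculus ℝ A IsSelfAdjoint]
  [NonnegSpectrumClass ℝ A] [T2Space A] {a b : A}

lemma commute_rpow_left [IsTopologicalRing A] (h : Commute a b) (y : ℝ) : Commute (a ^ y) b :=
  h.cfc_nnreal _

lemma smul_rpow_of_pos [IsSemitopologicalRing A] {c : ℝ} (hc : 0 < c)
    (ha : IsStrictlyPositive a) (y : ℝ) : (c • a) ^ y = c ^ y • a ^ y := by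
  have hpos : ∀ x ∈ spectrum ℝ a, 0 < x := fun x hx => ha.spectrum_pos hx
  have hcont : ContinuousOn (fun x : ℝ => x ^ y) (spectrum ℝ a) :=
    continuousOn_id.rpow_const fun x hx => Or.inl (hpos x hx).ne'
  rw [← cfc_const_mul_id c a, CFC.cfc_rpow (fun x hx => mul_pos hc (hpos x hx)),
    CFC.rpow_eq_cfc_real, ← cfc_const_mul _ _ a]
  exact cfc_congr fun x hx => Real.mul_rpow hc.le (hpos x hx).le

end StarAlgebra

section Matrix

open scoped MatrixOrder

variable {n 𝕜 : Type*} [Fintype n] [DecidableEq n] [RCLike 𝕜] {A B X σ : Matrix n n 𝕜} {a : ℝ}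

/-- The squared overlaps `|⟨u i, v j⟩|²` of the orthonormal eigenbases `u` of `A` and `v` of `B`,
indexed by the pair `(i, j)`. They are the weights that turn traces of products of functions of
`A` and `B` into finite sums. -/
noncomputable def eigenOverlap (hA : A.IsHermitian) (hB : B.IsHermitian) (i : n × n) : ℝ :=
  ‖((star hA.eigenvectorUnitary * hB.eigenvectorUnitary : unitaryGroup n 𝕜) :
    Matrix n n 𝕜) i.1 i.2‖ ^ 2

lemma trace_diagonal_mul_mul_diagonal_mul_star (D₁ D₂ : n → 𝕜) (M : Matrix n n 𝕜) :
    (diagonal D₁ * M * (diagonal D₂ * star M)).trace =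
      ∑ i : n × n, (‖M i.1 i.2‖ : 𝕜) ^ 2 * (D₁ i.1 * D₂ i.2) := by
  simp only [trace, diag_apply, mul_apply (M := _ * M), diagonal_mul, star_apply,
    Fintype.sum_prod_type, ← RCLike.mul_conj, RCLike.star_def]
  exact Finset.sum_congr rfl fun i _ => Finset.sum_congr rfl fun j _ => by ring

lemma trace_cfc_mul_cfc (hA : A.IsHermitian) (hB : B.IsHermitian) (f g : ℝ → ℝ) :
    (cfc f A * cfc g B).trace = ((∑ i, eigenOverlap hA hB i *
      (f (hA.eigenvalues i.1) * g (hB.eigenvalues i.2)) : ℝ) : 𝕜) := by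
  set V := hA.eigenvectorUnitary with hV
  set W := hB.eigenvectorUnitary with hW
  have hcycle (D₁ D₂ : Matrix n n 𝕜) :
      (V * D₁ * star (V : Matrix n n 𝕜) * (W * D₂ * star (W : Matrix n n 𝕜))).trace =
        (D₁ * (star V * W : unitaryGroup n 𝕜) *
          (D₂ * star ((star V * W : unitaryGroup n 𝕜) : Matrix n n 𝕜))).trace := by
    simp only [Matrix.mul_assoc, trace_mul_comm (V : Matrix n n 𝕜),
      Submonoid.coe_mul, Unitary.coe_star, star_mul, star_star]
  rw [hA.cfc_eq, hB.cfc_eq, IsHermitian.cfc, IsHermitian.cfc, Unitary.conjStarAlgAut_apply,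
    Unitary.conjStarAlgAut_apply, ← hV, ← hW]
  refine (hcycle _ _).trans ?_
  rw [trace_diagonal_mul_mul_diagonal_mul_star]
  simp [eigenOverlap, hV, hW]

lemma eigenOverlap_nonneg (hA : A.IsHermitian) (hB : B.IsHermitian) (i : n × n) :
    0 ≤ eigenOverlap hA hB i :=
  sq_nonneg _

lemma trace_eq_sum_eigenOverlap_left (hA : A.IsHermitian) (hB : B.IsHermitian) :
    A.trace = ((∑ i, eigenOverlap hA hB i * hA.eigenvalues i.1 : ℝ) : 𝕜) := by
  simpa [cfc_id' ℝ A hA.isSelfAdjoint, cfc_const_one ℝ B hB.isSelfAdjoint] using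
    trace_cfc_mul_cfc hA hB (fun x => x) (fun _ => 1)

lemma trace_eq_sum_eigenOverlap_right (hA : A.IsHermitian) (hB : B.IsHermitian) :
    B.trace = ((∑ i, eigenOverlap hA hB i * hB.eigenvalues i.2 : ℝ) : 𝕜) := by
  simpa [cfc_id' ℝ B hB.isSelfAdjoint, cfc_const_one ℝ A hA.isSelfAdjoint] using
    trace_cfc_mul_cfc hA hB (fun _ => 1) (fun x => x)

omit [DecidableEq n] in
lemma trace_mul_nonneg_of_posSemidef (hA : A.PosSemidef) (hB : B.PosSemidef) :
    0 ≤ (A * B).trace := by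
  classical
  have h := trace_cfc_mul_cfc hA.1 hB.1 (fun x => x) (fun x => x)
  rw [cfc_id' ℝ A hA.1.isSelfAdjoint, cfc_id' ℝ B hB.1.isSelfAdjoint] at h
  rw [h, RCLike.ofReal_nonneg]
  exact Finset.sum_nonneg fun i _ => mul_nonneg (eigenOverlap_nonneg _ _ _)
    (mul_nonneg (hA.eigenvalues_nonneg _) (hB.eigenvalues_nonneg _))

lemma trace_rpow_mul_rpow (hA : A.PosSemidef) (hB : B.PosSemidef) (s t : ℝ) :
    (A ^ s * B ^ t).trace = ((∑ i, eigenOverlap hA.1 hB.1 i *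
      (hA.1.eigenvalues i.1 ^ s * hB.1.eigenvalues i.2 ^ t) : ℝ) : 𝕜) := by
  rw [CFC.rpow_eq_cfc_real hA.nonneg, CFC.rpow_eq_cfc_real hB.nonneg, trace_cfc_mul_cfc]

theorem re_trace_rpow_mul_rpow_le (hA : A.PosSemidef) (hB : B.PosSemidef)
    (ha0 : 0 < a) (ha1 : a < 1) :
    RCLike.re (A ^ a * B ^ (1 - a)).trace ≤
      RCLike.re A.trace ^ a * RCLike.re B.trace ^ (1 - a) := by
  rw [trace_rpow_mul_rpow hA hB, trace_eq_sum_eigenOverlap_left hA.1 hB.1,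
    trace_eq_sum_eigenOverlap_right hA.1 hB.1]
  simp only [RCLike.ofReal_re]
  exact sum_mul_rpow_mul_rpow_le (eigenOverlap_nonneg _ _)
    (fun _ => hA.eigenvalues_nonneg _) (fun _ => hB.eigenvalues_nonneg _) ha0 ha1

theorem re_trace_le_re_trace_rpow_mul_rpow (hA : A.PosSemidef) (hB : B.PosDef) (ha : 1 ≤ a) :
    RCLike.re A.trace ≤
      RCLike.re B.trace ^ (1 - a⁻¹) * RCLike.re (A ^ a * B ^ (1 - a)).trace ^ a⁻¹ := by
  rw [trace_rpow_mul_rpow hA hB.posSemidef, trace_eq_sum_eigenOverlap_left hA.1 hB.1,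
    trace_eq_sum_eigenOverlap_right hA.1 hB.1]
  simp only [RCLike.ofReal_re]
  exact sum_mul_le_rpow_sum_mul_rpow_mul_rpow (eigenOverlap_nonneg _ _)
    (fun _ => hA.eigenvalues_nonneg _) (fun _ => hB.eigenvalues_pos _) ha

lemma posDef_rpow (hX : X.PosDef) (t : ℝ) : (X ^ t).PosDef :=
  (hX.isStrictlyPositive.rpow X t).posDef

theorem re_trace_rpow_sub_one_div_le (hX : X.PosSemidef) (hσ : σ.PosDef) (hσtr : σ.trace = 1)
    (ha0 : 0 < a) (ha1 : a ≠ 1) :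
    (RCLike.re (X ^ a⁻¹).trace - 1) / (a - 1) ≤
      (RCLike.re (X * σ ^ (1 - a)).trace ^ a⁻¹ - 1) / (a - 1) := by
  have hA : (X ^ a⁻¹).PosSemidef := CFC.rpow_nonneg.posSemidef
  have hpow : (X ^ a⁻¹) ^ a = X := by
    rw [CFC.rpow_rpow_of_exponent_nonneg X _ _ (inv_nonneg.2 ha0.le) ha0.le hX.nonneg,
      inv_mul_cancel₀ ha0.ne', CFC.rpow_one X hX.nonneg]
  rcases ha1.lt_or_gt with ha | ha
  · have holder := re_trace_rpow_mul_rpow_le hA hσ.posSemidef ha0 ha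
    have hnonneg := trace_mul_nonneg_of_posSemidef hX (posDef_rpow hσ (1 - a)).posSemidef
    rw [hpow, hσtr, RCLike.one_re, Real.one_rpow, mul_one] at holder
    refine div_le_div_of_nonpos_of_le (sub_nonpos.2 ha.le) (sub_le_sub_right ?_ 1)
    exact (Real.rpow_inv_le_iff_of_pos (RCLike.nonneg_iff.1 hnonneg).1
      (RCLike.nonneg_iff.1 hA.trace_nonneg).1 ha0).2 holder
  · have holder := re_trace_le_re_trace_rpow_mul_rpow hA hσ ha.le
    rw [hpow, hσtr, RCLike.one_re, Real.one_rpow, one_mul] at holder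
    exact div_le_div_of_nonneg_right (sub_le_sub_right holder 1) (sub_nonneg.2 ha.le)

/-- The density matrix `X ^ t / Tr (X ^ t)`. For `t = a⁻¹` it minimizes the relative entropy. -/
noncomputable def normalizedRpow (X : Matrix n n 𝕜) (t : ℝ) : Matrix n n 𝕜 :=
  (RCLike.re (X ^ t).trace)⁻¹ • X ^ t

lemma re_trace_rpow_pos [Nonempty n] (hX : X.PosDef) (t : ℝ) : 0 < RCLike.re (X ^ t).trace :=
  (RCLike.pos_iff.1 (posDef_rpow hX t).trace_pos).1

lemma posDef_normalizedRpow [Nonempty n] (hX : X.PosDef) (t : ℝ) : (normalizedRpow X t).PosDef :=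
  (posDef_rpow hX t).smul (inv_pos.2 (re_trace_rpow_pos hX t))

lemma trace_normalizedRpow [Nonempty n] (hX : X.PosDef) (t : ℝ) :
    (normalizedRpow X t).trace = 1 := by
  have hne : (X ^ t).trace ≠ 0 := (posDef_rpow hX t).trace_pos.ne'
  have hre : ((RCLike.re (X ^ t).trace : ℝ) : 𝕜) = (X ^ t).trace :=
    RCLike.conj_eq_iff_re.1 (posDef_rpow hX t).trace_pos.le.isSelfAdjoint
  rw [normalizedRpow, trace_smul, RCLike.real_smul_eq_coe_mul, RCLike.ofReal_inv, hre,
    inv_mul_cancel₀ hne]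

lemma commute_normalizedRpow (h : Commute X A) (t : ℝ) : Commute (normalizedRpow X t) A :=
  (commute_rpow_left h t).smul_left _

theorem re_trace_mul_normalizedRpow_rpow [Nonempty n] (hX : X.PosDef) (ha : 0 < a) :
    RCLike.re (X * normalizedRpow X a⁻¹ ^ (1 - a)).trace = RCLike.re (X ^ a⁻¹).trace ^ a := by
  have hpos := re_trace_rpow_pos hX a⁻¹
  have hmul : X * (X ^ a⁻¹) ^ (1 - a) = X ^ a⁻¹ := by
    have hexp : 1 + a⁻¹ * (1 - a) = a⁻¹ := by field_simp; ring
    rw [CFC.rpow_rpow X _ _ (inv_ne_zero ha.ne') hX.isStrictlyPositive]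
    nth_rw 1 [← CFC.rpow_one X hX.posSemidef.nonneg]
    rw [← CFC.rpow_add hX.isUnit, hexp]
  rw [normalizedRpow, smul_rpow_of_pos (inv_pos.2 hpos) (posDef_rpow hX a⁻¹).isStrictlyPositive,
    mul_smul_comm, hmul, trace_smul, RCLike.smul_re, Real.inv_rpow hpos.le, ← Real.rpow_neg hpos.le,
    ← Real.rpow_add_one hpos.ne', neg_sub, sub_add_cancel]

section Twirl

variable {G : Type*} [Group G] [Fintype G] (U : G →* unitaryGroup n 𝕜)

/-- The twirling map `E(X) = (1/|G|) ∑ g, U(g) X U(g)†` of a unitary representation `U`. -/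
noncomputable def twirl (X : Matrix n n 𝕜) : Matrix n n 𝕜 :=
  (Fintype.card G : 𝕜)⁻¹ • ∑ g, (U g : Matrix n n 𝕜) * X * star (U g : Matrix n n 𝕜)

lemma posDef_twirl (hX : X.PosDef) : (twirl U X).PosDef := by
  have hcard : (0 : 𝕜) < (Fintype.card G : 𝕜)⁻¹ :=
    RCLike.inv_pos.2 (Nat.cast_pos.2 Fintype.card_pos)
  refine PosDef.smul ?_ hcard
  refine Finset.sum_induction_nonempty _ PosDef (fun _ _ => PosDef.add) Finset.univ_nonempty ?_
  exact fun g _ => (IsUnit.posDef_star_right_conjugate_iff Unitary.isUnit_coe).2 hX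

lemma commute_twirl (X : Matrix n n 𝕜) (h : G) : Commute (twirl U X) (U h : Matrix n n 𝕜) := by
  rw [← unitary_mul_mul_star_eq_iff_commute, twirl, mul_smul_comm, smul_mul_assoc, Finset.mul_sum,
    Finset.sum_mul]
  refine congrArg _ (Fintype.sum_equiv (Equiv.mulLeft h) _ _ fun g => ?_)
  simp only [Equiv.coe_mulLeft, map_mul, UnitaryGroup.mul_val, star_mul, Matrix.mul_assoc]

lemma trace_twirl_mul (X : Matrix n n 𝕜) {M : Matrix n n 𝕜}
    (hM : ∀ g, Commute M (U g : Matrix n n 𝕜)) : (twirl U X * M).trace = (X * M).trace := by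
  have hconj (g : G) :
      ((U g : Matrix n n 𝕜) * X * star (U g : Matrix n n 𝕜) * M).trace = (X * M).trace := by
    nth_rw 1 [← (unitary_mul_mul_star_eq_iff_commute (U g) M).2 (hM g)]
    simp only [Matrix.mul_assoc, trace_mul_comm (U g : Matrix n n 𝕜)]
    simp [← Matrix.mul_assoc]
  simp [twirl, Finset.sum_mul, trace_sum, hconj]

end Twirl

end Matrix

section Tsallis

open scoped MatrixOrder

variable {d : ℕ} {a : ℝ} {ρ σ : Matrix (Fin d) (Fin d) ℂ}

lemma mpow_eq_rpow (hρ : ρ.PosSemidef) (t : ℝ) : mpow ρ t = ρ ^ t :=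
  (CFC.rpow_eq_cfc_real hρ.nonneg).symm

lemma tsallis_eq_twirl {G : Type*} [Group G] [Fintype G] (U : G →* unitaryGroup (Fin d) ℂ)
    (hσ : σ.PosSemidef) (hσU : ∀ g, Commute σ (U g : Matrix (Fin d) (Fin d) ℂ)) :
    tsallis a ρ σ =
      ((twirl U (mpow ρ a) * σ ^ (1 - a)).trace.re ^ a⁻¹ - 1) / (a - 1) := by
  rw [tsallis, mpow_eq_rpow hσ, one_div, trace_twirl_mul U _ fun g => commute_rpow_left (hσU g) _]

theorem stmt_16_general {d : ℕ} [NeZero d] {G : Type*} [Group G] [Fintype G]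
    (U : G →* unitaryGroup (Fin d) ℂ) {a : ℝ} (ha0 : 0 < a) (ha1 : a ≠ 1)
    {ρ : Matrix (Fin d) (Fin d) ℂ} (hρ : ρ.PosDef) :
    IsLeast (Set.range fun σ : {σ : Matrix (Fin d) (Fin d) ℂ // σ.PosDef ∧ σ.trace = 1 ∧
        ∀ g, (U g : Matrix (Fin d) (Fin d) ℂ) * σ * star (U g : Matrix (Fin d) (Fin d) ℂ) = σ} =>
        tsallis a ρ σ)
      (((mpow (twirl U (mpow ρ a)) (1 / a)).trace.re - 1) / (a - 1)) := by
  have hX : (twirl U (mpow ρ a)).PosDef :=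
    posDef_twirl U (mpow_eq_rpow hρ.posSemidef a ▸ posDef_rpow hρ a)
  have hopt : ∀ g, Commute (normalizedRpow (twirl U (mpow ρ a)) a⁻¹)
      (U g : Matrix (Fin d) (Fin d) ℂ) :=
    fun g => commute_normalizedRpow (commute_twirl U _ g) _
  rw [mpow_eq_rpow hX.posSemidef, one_div]
  refine ⟨⟨⟨_, posDef_normalizedRpow hX a⁻¹, trace_normalizedRpow hX a⁻¹,
    fun g => (unitary_mul_mul_star_eq_iff_commute _ _).2 (hopt g)⟩, ?_⟩, ?_⟩
  · have hval := re_trace_mul_normalizedRpow_rpow hX ha0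
    have hpos := re_trace_rpow_pos hX a⁻¹
    simp only [RCLike.re_eq_complex_re] at hval hpos
    simp only [tsallis_eq_twirl U (posDef_normalizedRpow hX a⁻¹).posSemidef hopt, hval,
      Real.rpow_rpow_inv hpos.le ha0.ne']
  · rintro _ ⟨⟨σ, hσ, hσtr, hσU⟩, rfl⟩
    have hσU g := (unitary_mul_mul_star_eq_iff_commute (U g) σ).1 (hσU g)
    simp only [tsallis_eq_twirl U hσ.posSemidef hσU]
    exact re_trace_rpow_sub_one_div_le hX.posSemidef hσ hσtr ha0 ha1

end Tsallis

/-- Asymmetry: for a unitary representation `U` of a finite group `G`, the twirling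
map `E(ρ) = (1/|G|) Σ_g U(g) ρ U(g)†`, `a ∈ (0,1) ∪ (1,2]` and a positive definite
density matrix `ρ`, the infimum of `S̃_a(ρ|σ)` over positive definite `G`-invariant
density matrices `σ` equals `(Tr((E(ρ^a))^(1/a)) - 1)/(a - 1)`. -/
theorem stmt_16 {d : ℕ} {G : Type} [Group G] [Fintype G]
    (U : G →* Matrix.unitaryGroup (Fin d) ℂ)
    (E : Matrix (Fin d) (Fin d) ℂ → Matrix (Fin d) (Fin d) ℂ)
    (hE : ∀ X, E X = ((Fintype.card G : ℂ))⁻¹ •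
      ∑ g : G, (U g : Matrix (Fin d) (Fin d) ℂ) * X * star ((U g : Matrix (Fin d) (Fin d) ℂ)))
    (a : ℝ) (ha : a ∈ Set.Ioo (0 : ℝ) 1 ∪ Set.Ioc (1 : ℝ) 2)
    (ρ : Matrix (Fin d) (Fin d) ℂ) (hρ : ρ.PosDef) (hρtr : ρ.trace = 1) :
    (⨅ σ : {σ : Matrix (Fin d) (Fin d) ℂ // σ.PosDef ∧ σ.trace = 1 ∧
        ∀ g : G, (U g : Matrix (Fin d) (Fin d) ℂ) * σ *
          star ((U g : Matrix (Fin d) (Fin d) ℂ)) = σ},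
        tsallis a ρ (σ : Matrix (Fin d) (Fin d) ℂ))
      = (((mpow (E (mpow ρ a)) (1 / a)).trace).re - 1) / (a - 1) := by
  have ha0 : 0 < a := ha.elim (·.1) (zero_lt_one.trans ·.1)
  have ha1 : a ≠ 1 := ha.elim (·.2.ne) (·.1.ne')
  have : NeZero d := ⟨by rintro rfl; simp at hρtr⟩
  obtain rfl : E = twirl U := funext hE
  exact (stmt_16_general U ha0 ha1 hρ).csInf_eq
end
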